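/- arXiv:2103.08027 — 2 statements merged into one kernel-verified Lean document; each statement's English description precedes it below -/
import Mathlib

section
/- Extended generalized Faulhaber formula for the sum of square roots: Let x ∈ ℝ with x > 0. Then the series ∑_{k=1}^{∞} (−1)^k (∑_{l=1}^{k} C(3/2, l) S_k^{(1)}(l) B_l({x})) / ((x+1)(x+2)⋯(x+k)) converges absolutely, and ∑_{k=1}^{⌊x⌋} √k = (2/3) x^{3/2} − (1/(4π)) ζ(3/2) + (2/3) x^{3/2} ∑_{k=1}^{∞} (−1)^k (∑_{l=1}^{k} C(3/2, l) S_k^{(1)}(l) B_l({x})) / ((x+1)(x+2)⋯(x+k)). -/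
open Finset in
/-- Unsigned Stirling numbers of the first kind, via the rising-factorial recurrence:
`z(z+1)⋯(z+k−1) = ∑ l, stirling1Unsigned k l * z^l`. -/
def stirling1Unsigned : ℕ → ℕ → ℕ
  | 0, 0 => 1
  | 0, _ + 1 => 0
  | k + 1, 0 => k * stirling1Unsigned k 0
  | k + 1, l + 1 => stirling1Unsigned k l + k * stirling1Unsigned k (l + 1)

/-- The Stirling numbers of the first kind `S_k^{(1)}(l)` of the paper, defined by
`z(z+1)⋯(z+k−1) = (−1)^k ∑_{l=0}^k (−1)^l S_k^{(1)}(l) z^l`, i.e.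
`S_k^{(1)}(l) = (−1)^{k−l}` times the coefficient of `z^l` in the rising factorial. -/
def S1 (k l : ℕ) : ℤ := (-1) ^ (k + l) * stirling1Unsigned k l

/-- The `n`-th Bernoulli polynomial `B_n(x) = ∑_{k=0}^n C(n,k) B_k x^{n−k}`,
with `B_1 = −1/2`. -/
noncomputable def bernPoly (n : ℕ) (x : ℝ) : ℝ :=
  ∑ k ∈ Finset.range (n + 1), (n.choose k : ℝ) * (bernoulli k : ℝ) * x ^ (n - k)

/-- The generalized binomial coefficient `C(w,k) = w(w−1)⋯(w−k+1)/k!`. -/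
noncomputable def cchoose (w : ℂ) (k : ℕ) : ℂ :=
  (∏ i ∈ Finset.range k, (w - i)) / (k.factorial : ℂ)

/-- The rising product `(z+1)(z+2)⋯(z+k)`. -/
noncomputable def risingProd (z : ℂ) (k : ℕ) : ℂ :=
  ∏ i ∈ Finset.range k, (z + i + 1)

/-- The rising product `(x+1)(x+2)⋯(x+k)` over the reals. -/
noncomputable def risingProdR (x : ℝ) (k : ℕ) : ℝ :=
  ∏ i ∈ Finset.range k, (x + i + 1)

/-- The digamma function `ψ(z) = Γ′(z)/Γ(z)`. -/
noncomputable def digamma (z : ℂ) : ℂ := deriv Complex.Gamma z / Complex.Gamma z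

/-!
For `z` on the imaginary axis, `1 / (x - z)` is the inverse factorial series
`∑ (z / 1 + 1)⋯(z / k + 1) k! / ((x + 1)⋯(x + k + 1))`: its partial sums telescope. Expand the
rising factorials in powers of `z` by Stirling numbers, put `z = x w / (2πin)`, and integrate
against `w ^ (-s - 2) e ^ (-x w)`: the powers of `w` become Gamma values, hence binomial
coefficients `C(s + 1, l)`, and the powers of `1 / (2πin)`, summed over the Fourier modes `n`,
become the Bernoulli polynomials of degree at least two. All sums and integrals may be exchanged,
because the rising factorial on the imaginary axis is at most `exp (π |z|)` by Euler's product for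
the sine, which the factor `e ^ (-x w)` absorbs. So the series is absolutely convergent, and up to
the Bernoulli polynomial of degree one it is a sum over `n` of the elementary integrals
`∫ w ^ (-s) e ^ ((2πin - w) x) / (2πin (2πin - w)) dw`.

As a function of `x` this mode sum is continuous, and on each `(m, m + 1)` its derivative is, up to
a factor, `x ^ (s - 1)` times the sawtooth function. Hence a multiple of it and the Euler–Maclaurin
defect `∑_{k ≤ x} k ^ s - x ^ (s + 1) / (s + 1) + ({x} - 1 / 2) x ^ s` add up to a constant. At
`x = 0` opposite modes pair up to Mellin transforms of `1 / (c ^ 2 + w ^ 2)`, and the functional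
equation identifies the constant as `ζ(-s)`.
-/

namespace ExtendedFaulhaber

open Finset Filter Topology MeasureTheory

section RisingRatio

variable {𝕜 : Type*} [Field 𝕜]

/-- The normalised rising factorial `(z + 1)(z + 2)⋯(z + k) / k!`, i.e. `C(z + k, k)`. The product
form is the one in which consecutive values, and values at different `z`, compare easily. -/
def risingRatio (z : 𝕜) (k : ℕ) : 𝕜 :=
  ∏ j ∈ range k, (1 + z / (j + 1))

/-- The weight `k! / ((x + 1)(x + 2)⋯(x + k + 1))` of an inverse factorial series. -/
def factorialWeight (x : 𝕜) (k : ℕ) : 𝕜 :=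
  ((k + 1) * risingRatio x (k + 1))⁻¹

@[simp]
lemma risingRatio_zero (z : 𝕜) : risingRatio z 0 = 1 := by simp [risingRatio]

@[simp]
lemma risingRatio_zero_left (k : ℕ) : risingRatio (0 : 𝕜) k = 1 := by simp [risingRatio]

lemma risingRatio_succ (z : 𝕜) (k : ℕ) :
    risingRatio z (k + 1) = risingRatio z k * (1 + z / (k + 1)) :=
  prod_range_succ _ _

lemma factorial_mul_risingRatio [CharZero 𝕜] (z : 𝕜) (k : ℕ) :
    k.factorial * risingRatio z k = ∏ j ∈ range k, (z + j + 1) := by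
  rw [risingRatio, ← prod_range_add_one_eq_factorial, Nat.cast_prod, ← prod_mul_distrib]
  refine prod_congr rfl fun j _ => ?_
  have : (j + 1 : 𝕜) ≠ 0 := Nat.cast_add_one_ne_zero j
  push_cast
  field_simp
  ring

lemma factorialWeight_eq_div [CharZero 𝕜] (x : 𝕜) (k : ℕ) :
    factorialWeight x k = k.factorial / ∏ j ∈ range (k + 1), (x + j + 1) := by
  have : (k.factorial : 𝕜) ≠ 0 := Nat.cast_ne_zero.mpr k.factorial_ne_zero
  rw [← factorial_mul_risingRatio, factorialWeight, Nat.factorial_succ]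
  push_cast
  field_simp

lemma risingRatio_div_succ_sub_div [CharZero 𝕜] {x : 𝕜} (z : 𝕜) {k : ℕ}
    (hx : risingRatio x (k + 1) ≠ 0) :
    risingRatio z k / risingRatio x k - risingRatio z (k + 1) / risingRatio x (k + 1) =
      (x - z) * (risingRatio z k * factorialWeight x k) := by
  have hk : (k + 1 : 𝕜) ≠ 0 := Nat.cast_add_one_ne_zero k
  rw [factorialWeight]
  rw [risingRatio_succ] at hx ⊢
  obtain ⟨_, _⟩ := mul_ne_zero_iff.mp hx
  rw [risingRatio_succ]
  generalize hc : 1 + x / (k + 1 : 𝕜) = c at *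
  have hc' : x = (c - 1) * (k + 1) := by rw [← hc]; field_simp; ring
  rw [hc']
  field_simp
  ring

lemma sum_risingRatio_mul_factorialWeight [CharZero 𝕜] {x z : 𝕜} (hxz : x ≠ z)
    (hx : ∀ k, risingRatio x k ≠ 0) (n : ℕ) :
    ∑ k ∈ range n, risingRatio z k * factorialWeight x k =
      (1 - risingRatio z n / risingRatio x n) / (x - z) := by
  rw [eq_div_iff (sub_ne_zero.mpr hxz), mul_comm, mul_sum,
    ← sum_congr rfl fun k _ => risingRatio_div_succ_sub_div z (hx (k + 1)),
    sum_range_sub' fun k => risingRatio z k / risingRatio x k]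
  simp

end RisingRatio

section RealRisingRatio

variable {x : ℝ}

lemma harmonic_cast_nonneg (k : ℕ) : (0 : ℝ) ≤ harmonic k := by
  rw [harmonic]
  positivity

lemma risingRatio_pos (hx : 0 ≤ x) (k : ℕ) : 0 < risingRatio x k :=
  prod_pos fun _ _ => by positivity

lemma factorialWeight_pos (hx : 0 ≤ x) (k : ℕ) : 0 < factorialWeight x k := by
  have := risingRatio_pos hx (k + 1)
  rw [factorialWeight]
  positivity

lemma one_add_mul_harmonic_le_risingRatio (hx : 0 ≤ x) (k : ℕ) :
    1 + x * harmonic k ≤ risingRatio x k := by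
  induction k with
  | zero => simp
  | succ k ih =>
    have hH := harmonic_cast_nonneg k
    have hcross : 0 ≤ x * harmonic k * (x / (k + 1)) := by positivity
    rw [risingRatio_succ, harmonic_succ]
    push_cast
    calc 1 + x * (harmonic k + (k + 1 : ℝ)⁻¹)
        ≤ (1 + x * harmonic k) * (1 + x / (k + 1)) := by
          rw [div_eq_mul_inv] at hcross ⊢
          linarith
      _ ≤ risingRatio x k * (1 + x / (k + 1)) := by gcongr

lemma tendsto_risingRatio_atTop (hx : 0 < x) : Tendsto (risingRatio x) atTop atTop := by
  have hH : Tendsto (fun k : ℕ => (harmonic k : ℝ)) atTop atTop := by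
    simpa [harmonic] using Real.tendsto_sum_range_one_div_nat_succ_atTop
  exact tendsto_atTop_mono (one_add_mul_harmonic_le_risingRatio hx.le)
    (tendsto_atTop_add_const_left _ _ (hH.const_mul_atTop hx))

lemma summable_risingRatio_mul_factorialWeight {z : ℝ} (hz : 0 ≤ z) (hzx : z < x) :
    Summable fun k => risingRatio z k * factorialWeight x k := by
  have hx : 0 ≤ x := hz.trans hzx.le
  refine summable_of_sum_range_le (c := 1 / (x - z))
    (fun k => mul_nonneg (risingRatio_pos hz k).le (factorialWeight_pos hx k).le) fun n => ?_
  rw [sum_risingRatio_mul_factorialWeight hzx.ne' fun k => (risingRatio_pos hx k).ne']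
  have hquot := div_pos (risingRatio_pos hz n) (risingRatio_pos hx n)
  have := sub_pos.mpr hzx
  gcongr
  linarith

-- `harmonic k` is dominated by `risingRatio (x / 2) k`, whose weighted sum still telescopes.
lemma summable_harmonic_mul_factorialWeight (hx : 0 < x) :
    Summable fun k => (harmonic k : ℝ) * factorialWeight x k := by
  have hsum := summable_risingRatio_mul_factorialWeight (half_pos hx).le (half_lt_self hx)
  refine Summable.of_nonneg_of_le
    (fun k => mul_nonneg (harmonic_cast_nonneg k) (factorialWeight_pos hx.le k).le) (fun k => ?_)
    (hsum.mul_left (2 / x))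
  have hH : (harmonic k : ℝ) ≤ 2 / x * risingRatio (x / 2) k := by
    have := one_add_mul_harmonic_le_risingRatio (half_pos hx).le k
    rw [div_mul_eq_mul_div, le_div_iff₀ hx]
    linarith
  rw [← mul_assoc]
  exact mul_le_mul_of_nonneg_right hH (factorialWeight_pos hx.le k).le

end RealRisingRatio

section ImaginaryRisingRatio

@[simp]
lemma ofReal_risingRatio (x : ℝ) (k : ℕ) :
    ((risingRatio x k : ℝ) : ℂ) = risingRatio (x : ℂ) k := by
  simp [risingRatio]

@[simp]
lemma ofReal_factorialWeight (x : ℝ) (k : ℕ) :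
    ((factorialWeight x k : ℝ) : ℂ) = factorialWeight (x : ℂ) k := by
  simp [factorialWeight]

lemma norm_factorialWeight {x : ℝ} (hx : 0 ≤ x) (k : ℕ) :
    ‖factorialWeight (x : ℂ) k‖ = factorialWeight x k := by
  rw [← ofReal_factorialWeight, Complex.norm_of_nonneg (factorialWeight_pos hx k).le]

lemma tendsto_prod_one_add_sq_div_sq (τ : ℝ) :
    Tendsto (fun n : ℕ => Real.pi * τ * ∏ j ∈ range n, (1 + τ ^ 2 / ((j : ℝ) + 1) ^ 2)) atTop
      (𝓝 (Real.sinh (Real.pi * τ))) := by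
  rw [← Filter.tendsto_ofReal_iff]
  convert (Complex.tendsto_euler_sin_prod (τ * Complex.I)).const_mul (-Complex.I) using 2
  · push_cast
    simp only [mul_pow, Complex.I_sq, mul_neg_one, neg_div, sub_neg_eq_add]
    linear_combination (Real.pi * τ * ∏ j ∈ range _, (1 + (τ : ℂ) ^ 2 / ((j : ℂ) + 1) ^ 2)) *
      Complex.I_sq
  · rw [← mul_assoc, Complex.sin_mul_I]
    push_cast
    linear_combination Complex.sinh (Real.pi * τ) * Complex.I_sq

lemma sinh_le_mul_exp {y : ℝ} : Real.sinh y ≤ y * Real.exp y := by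
  have hexp : Real.exp (-y) = Real.exp y * Real.exp (-(2 * y)) := by
    rw [← Real.exp_add]
    ring_nf
  have := mul_le_mul_of_nonneg_left (Real.add_one_le_exp (-(2 * y))) (Real.exp_pos y).le
  rw [Real.sinh_eq, hexp]
  linarith

lemma prod_one_add_sq_div_sq_le_exp (τ : ℝ) (n : ℕ) :
    ∏ j ∈ range n, (1 + τ ^ 2 / ((j : ℝ) + 1) ^ 2) ≤ Real.exp (Real.pi * |τ|) := by
  rcases eq_or_ne τ 0 with rfl | hτ
  · simp
  have hpos : 0 < Real.pi * |τ| := mul_pos Real.pi_pos (abs_pos.mpr hτ)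
  have hmono : Monotone fun n : ℕ =>
      Real.pi * |τ| * ∏ j ∈ range n, (1 + |τ| ^ 2 / ((j : ℝ) + 1) ^ 2) := by
    refine monotone_nat_of_le_succ fun n => ?_
    rw [prod_range_succ]
    gcongr
    exact le_mul_of_one_le_right (prod_nonneg fun j _ => by positivity)
      (le_add_of_nonneg_right (by positivity))
  have hle := (hmono.ge_of_tendsto (tendsto_prod_one_add_sq_div_sq |τ|) n).trans sinh_le_mul_exp
  simpa only [sq_abs] using le_of_mul_le_mul_left hle hpos

variable {z : ℂ}

lemma norm_one_add_div_sq (hz : z.re = 0) (j : ℕ) :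
    ‖1 + z / ((j : ℂ) + 1)‖ ^ 2 = 1 + z.im ^ 2 / ((j : ℝ) + 1) ^ 2 := by
  have hcoord : 1 + z / ((j : ℂ) + 1) =
      ((1 : ℝ) : ℂ) + ((z.im / ((j : ℝ) + 1) : ℝ) : ℂ) * Complex.I := by
    conv_lhs => rw [← Complex.re_add_im z, hz]
    push_cast
    ring
  rw [hcoord, ← Complex.normSq_eq_norm_sq, Complex.normSq_add_mul_I, div_pow, one_pow]

lemma norm_risingRatio_le_exp (hz : z.re = 0) (k : ℕ) :
    ‖risingRatio z k‖ ≤ Real.exp (Real.pi * ‖z‖) := by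
  have hnorm : ‖z‖ = |z.im| := by simp [Complex.norm_eq_sqrt_sq_add_sq, hz, Real.sqrt_sq_eq_abs]
  rw [hnorm, risingRatio, norm_prod]
  refine (prod_le_prod (fun _ _ => norm_nonneg _) fun j _ => ?_).trans
    (prod_one_add_sq_div_sq_le_exp z.im k)
  have hsq := norm_one_add_div_sq hz j
  rw [← hsq]
  refine le_self_pow₀ ?_ two_ne_zero
  rw [← one_le_sq_iff₀ (norm_nonneg _), hsq]
  exact le_add_of_nonneg_right (by positivity)

lemma norm_risingRatio_sub_one_le (hz : z.re = 0) (k : ℕ) :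
    ‖risingRatio z k - 1‖ ≤ ‖z‖ * harmonic k * Real.exp (Real.pi * ‖z‖) := by
  induction k with
  | zero => simp
  | succ k ih =>
    have hinc : ‖risingRatio z k * (z / (k + 1))‖ ≤
        Real.exp (Real.pi * ‖z‖) * (‖z‖ * (k + 1 : ℝ)⁻¹) := by
      have hk : ‖(k + 1 : ℂ)‖ = k + 1 := by exact_mod_cast Complex.norm_natCast (k + 1)
      rw [norm_mul, norm_div, hk, div_eq_mul_inv]
      gcongr
      exact norm_risingRatio_le_exp hz k
    calc ‖risingRatio z (k + 1) - 1‖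
        = ‖(risingRatio z k - 1) + risingRatio z k * (z / (k + 1))‖ := by
          rw [risingRatio_succ]
          ring_nf
      _ ≤ ‖z‖ * harmonic k * Real.exp (Real.pi * ‖z‖) +
            Real.exp (Real.pi * ‖z‖) * (‖z‖ * (k + 1 : ℝ)⁻¹) := norm_add_le_of_le ih hinc
      _ = ‖z‖ * harmonic (k + 1) * Real.exp (Real.pi * ‖z‖) := by
          rw [harmonic_succ]
          push_cast
          ring

lemma tendsto_risingRatio_div_risingRatio {x : ℝ} (hx : 0 < x) (hz : z.re = 0) :
    Tendsto (fun n => risingRatio z n / risingRatio (x : ℂ) n) atTop (𝓝 0) := by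
  refine squeeze_zero_norm (fun n => ?_)
    ((tendsto_risingRatio_atTop hx).const_div_atTop (Real.exp (Real.pi * ‖z‖)))
  have hpos := risingRatio_pos hx.le n
  rw [norm_div, ← ofReal_risingRatio, Complex.norm_of_nonneg hpos.le]
  gcongr
  exact norm_risingRatio_le_exp hz n

lemma tendsto_sum_risingRatio_mul_factorialWeight {x : ℝ} (hx : 0 < x) (hz : z.re = 0) :
    Tendsto (fun n => ∑ k ∈ range n, risingRatio z k * factorialWeight (x : ℂ) k) atTop
      (𝓝 (1 / (x - z))) := by
  have hxz : (x : ℂ) ≠ z := by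
    rintro rfl
    exact hx.ne' hz
  have hne : ∀ k, risingRatio (x : ℂ) k ≠ 0 := fun k => by
    rw [← ofReal_risingRatio]
    exact_mod_cast (risingRatio_pos hx.le k).ne'
  simp only [sum_risingRatio_mul_factorialWeight hxz hne]
  simpa using ((tendsto_risingRatio_div_risingRatio hx hz).const_sub 1).div_const ((x : ℂ) - z)

lemma hasSum_factorialWeight {x : ℝ} (hx : 0 < x) :
    HasSum (fun k => factorialWeight (x : ℂ) k) (1 / (x : ℂ)) := by
  have hsum : Summable fun k => factorialWeight (x : ℂ) k := by
    refine .of_norm ?_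
    simpa [norm_factorialWeight hx.le] using
      summable_risingRatio_mul_factorialWeight le_rfl hx
  refine (hsum.hasSum_iff_tendsto_nat).mpr ?_
  simpa using tendsto_sum_risingRatio_mul_factorialWeight (z := 0) hx rfl

lemma hasSum_risingRatio_sub_one_mul_factorialWeight {x : ℝ} (hx : 0 < x) (hz : z.re = 0) :
    HasSum (fun k => (risingRatio z k - 1) * factorialWeight (x : ℂ) k)
      (1 / (x - z) - 1 / x) := by
  have hsum : Summable fun k => (risingRatio z k - 1) * factorialWeight (x : ℂ) k := by
    refine .of_norm_bounded ((summable_harmonic_mul_factorialWeight hx).mul_left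
      (‖z‖ * Real.exp (Real.pi * ‖z‖))) fun k => ?_
    rw [norm_mul, norm_factorialWeight hx.le, ← mul_assoc]
    refine mul_le_mul_of_nonneg_right ?_ (factorialWeight_pos hx.le k).le
    linarith [norm_risingRatio_sub_one_le hz k]
  refine (hsum.hasSum_iff_tendsto_nat).mpr ?_
  simpa only [sub_one_mul, sum_sub_distrib] using
    (tendsto_sum_risingRatio_mul_factorialWeight hx hz).sub
      (hasSum_factorialWeight hx).tendsto_sum_nat

end ImaginaryRisingRatio

section Stirling

lemma stirling1Unsigned_eq_stirlingFirst (k l : ℕ) :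
    stirling1Unsigned k l = Nat.stirlingFirst k l := by
  induction k generalizing l with
  | zero => cases l <;> rfl
  | succ k ih =>
    cases l with
    | zero =>
      rw [stirling1Unsigned, ih, Nat.stirlingFirst_succ_zero]
      cases k <;> simp
    | succ l => rw [stirling1Unsigned, ih, ih, Nat.stirlingFirst_succ_succ, add_comm]

lemma neg_one_pow_mul_S1 (k l : ℕ) :
    (-1 : ℂ) ^ k * S1 k l = (-1) ^ l * Nat.stirlingFirst k l := by
  rw [S1, stirling1Unsigned_eq_stirlingFirst]
  push_cast
  rw [pow_add, ← mul_assoc, ← mul_assoc, ← mul_pow]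
  simp

lemma ascPochhammer_eval_eq_sum_stirlingFirst {R : Type*} [CommSemiring R] (k : ℕ) (z : R) :
    (ascPochhammer R k).eval z = ∑ l ∈ range (k + 1), Nat.stirlingFirst k l * z ^ l := by
  induction k with
  | zero => simp
  | succ k ih =>
    have htop : Nat.stirlingFirst k (k + 1) = 0 := Nat.stirlingFirst_eq_zero_of_lt k.lt_succ_self
    have hshift : ∑ l ∈ range (k + 1), (Nat.stirlingFirst k (l + 1) : R) * z ^ (l + 1) +
        Nat.stirlingFirst k 0 = ∑ l ∈ range (k + 1), Nat.stirlingFirst k l * z ^ l := by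
      have := sum_range_succ' (fun l => (Nat.stirlingFirst k l : R) * z ^ l) (k + 1)
      rwa [sum_range_succ, htop, Nat.cast_zero, zero_mul, add_zero, pow_zero, mul_one,
        eq_comm] at this
    have hbot : (k : R) * Nat.stirlingFirst k 0 = 0 := by cases k <;> simp
    rw [ascPochhammer_succ_eval, ih, sum_range_succ' _ (k + 1), Nat.stirlingFirst_succ_zero]
    simp only [Nat.stirlingFirst_succ_succ, Nat.cast_add, Nat.cast_mul, add_mul, sum_add_distrib,
      mul_assoc]
    rw [← mul_sum]
    calc (∑ l ∈ range (k + 1), (Nat.stirlingFirst k l : R) * z ^ l) * (z + k)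
        = k * (∑ l ∈ range (k + 1), (Nat.stirlingFirst k (l + 1) : R) * z ^ (l + 1)) +
            k * Nat.stirlingFirst k 0 +
            (∑ l ∈ range (k + 1), (Nat.stirlingFirst k l : R) * z ^ l) * z := by
          rw [← mul_add, hshift]
          ring
      _ = _ := by
          rw [hbot, sum_mul]
          simp [pow_succ, mul_assoc]

lemma ascPochhammer_succ_eval_eq_risingRatio {𝕜 : Type*} [Field 𝕜] [CharZero 𝕜] (z : 𝕜) (k : ℕ) :
    (ascPochhammer 𝕜 (k + 1)).eval z = k.factorial * z * risingRatio z k := by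
  induction k with
  | zero => simp
  | succ k ih =>
    have : (k + 1 : 𝕜) ≠ 0 := Nat.cast_add_one_ne_zero k
    rw [ascPochhammer_succ_eval, ih, risingRatio_succ, Nat.factorial_succ]
    push_cast
    field_simp
    ring

lemma sum_Icc_two_stirlingFirst_mul_pow {𝕜 : Type*} [Field 𝕜] [CharZero 𝕜] (z : 𝕜) (k : ℕ) :
    ∑ l ∈ Icc 2 (k + 1), (Nat.stirlingFirst (k + 1) l : 𝕜) / k.factorial * z ^ l =
      z * (risingRatio z k - 1) := by
  have hfac : (k.factorial : 𝕜) ≠ 0 := Nat.cast_ne_zero.mpr k.factorial_ne_zero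
  have hsum := ascPochhammer_eval_eq_sum_stirlingFirst (k + 1) z
  rw [ascPochhammer_succ_eval_eq_risingRatio, range_eq_Ico,
    sum_eq_sum_Ico_succ_bot (by omega), sum_eq_sum_Ico_succ_bot (by omega),
    Nat.stirlingFirst_succ_zero, Nat.stirlingFirst_one_right] at hsum
  have hIcc : Icc 2 (k + 1) = Ico (0 + 1 + 1) (k + 1 + 1) := rfl
  simp only [div_mul_eq_mul_div, ← sum_div]
  rw [hIcc, div_eq_iff hfac]
  linear_combination -hsum

end Stirling

section Coefficients

lemma neg_one_pow_mul_cchoose_mul_factorial {a : ℂ} (ha : ∀ m : ℕ, a ≠ m) (l : ℕ) :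
    (-1) ^ l * cchoose a l * l.factorial =
      Complex.Gamma (l - a) / Complex.Gamma (-a) := by
  have hfac : (l.factorial : ℂ) ≠ 0 := Nat.cast_ne_zero.mpr l.factorial_ne_zero
  rw [cchoose, mul_assoc, div_mul_cancel₀ _ hfac, ← descPochhammer_eval_eq_prod_range,
    ← ascPochhammer_eval_neg_eq_descPochhammer,
    ← Complex.Gamma_add_nat_div_Gamma_eq (-a) fun m => neg_injective.ne (ha m), sub_eq_neg_add]

/-- The `k`-th term (counting from `0`) of the inverse factorial series in the extended Faulhaber
formula whose binomial coefficients are `C(a, l)`. -/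
noncomputable def faulhaberTerm (a : ℂ) (x : ℝ) (k : ℕ) : ℂ :=
  (-1 : ℂ) ^ (k + 1) *
      (∑ l ∈ Icc 1 (k + 1), cchoose a l * (S1 (k + 1) l : ℂ) * (bernPoly l (Int.fract x) : ℂ)) /
    risingProd (x : ℂ) (k + 1)

lemma faulhaberTerm_eq {a : ℂ} (ha : ∀ m : ℕ, a ≠ m) (x : ℝ) (k : ℕ) :
    faulhaberTerm a x k = factorialWeight (x : ℂ) k *
      (-(a * bernPoly 1 (Int.fract x)) +
        (Complex.Gamma (-a))⁻¹ * ∑ l ∈ Icc 2 (k + 1), (Nat.stirlingFirst (k + 1) l : ℂ) /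
          k.factorial * (Complex.Gamma (l - a) *
            (bernPoly l (Int.fract x) / l.factorial))) := by
  have hfac : ∀ n : ℕ, (n.factorial : ℂ) ≠ 0 := fun n => Nat.cast_ne_zero.mpr n.factorial_ne_zero
  have hIcc : Icc 2 (k + 1) = Ico (1 + 1) (k + 1 + 1) := rfl
  have hcoeff : ∀ l, (-1) ^ (k + 1) *
      (cchoose a l * (S1 (k + 1) l : ℂ) * (bernPoly l (Int.fract x) : ℂ)) =
      Nat.stirlingFirst (k + 1) l * ((-1) ^ l * cchoose a l * bernPoly l (Int.fract x)) := by
    intro l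
    linear_combination cchoose a l * bernPoly l (Int.fract x) * neg_one_pow_mul_S1 (k + 1) l
  have hgamma : ∀ l : ℕ, (-1) ^ l * cchoose a l * bernPoly l (Int.fract x) =
      (Complex.Gamma (-a))⁻¹ *
        (Complex.Gamma (l - a) * (bernPoly l (Int.fract x) / l.factorial)) := fun l => by
    rw [eq_div_of_mul_eq (hfac l) (neg_one_pow_mul_cchoose_mul_factorial ha l)]
    ring
  rw [faulhaberTerm, mul_sum, sum_congr rfl fun l _ => hcoeff l, ← Ico_add_one_right_eq_Icc,
    sum_eq_sum_Ico_succ_bot (by omega), Nat.stirlingFirst_one_right,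
    sum_congr rfl fun l _ => congrArg _ (hgamma l), ← hIcc, factorialWeight_eq_div, risingProd,
    show (-1 : ℂ) ^ 1 * cchoose a 1 = -a by simp [cchoose], div_mul_eq_mul_div]
  congr 1
  rw [mul_add, mul_sum, mul_sum]
  refine congrArg₂ _ (by ring) (sum_congr rfl fun l _ => ?_)
  have := hfac k
  field_simp

end Coefficients

section Fourier

/-- The frequency `2πin` of the `n`-th Fourier mode on `ℝ / ℤ`. Sums over all `n : ℤ` with the
frequency in a denominator have no `n = 0` term, since `x / 0 = 0`. -/
noncomputable def freq (n : ℤ) : ℂ := 2 * Real.pi * Complex.I * n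

lemma freq_re (n : ℤ) : (freq n).re = 0 := by simp [freq]

lemma freq_zero : freq 0 = 0 := by simp [freq]

lemma freq_neg (n : ℤ) : freq (-n) = -freq n := by simp [freq]

lemma norm_freq (n : ℤ) : ‖freq n‖ = 2 * Real.pi * |(n : ℝ)| := by
  simp [freq, abs_of_pos Real.pi_pos]

lemma freq_ne_zero {n : ℤ} (hn : n ≠ 0) : freq n ≠ 0 := by
  simp [freq, Real.pi_ne_zero, hn]

lemma summable_norm_freq_rpow {p : ℝ} (hp : p < -1) : Summable fun n : ℤ => ‖freq n‖ ^ p := by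
  have hint : Summable fun n : ℤ => |(n : ℝ)| ^ p := by
    simpa using Real.summable_abs_int_rpow (b := -p) (by linarith)
  refine (hint.mul_left ((2 * Real.pi) ^ p)).congr fun n => ?_
  rw [norm_freq, ← Real.mul_rpow (by positivity) (by positivity)]

lemma norm_exp_freq_mul (n : ℤ) (x : ℝ) : ‖Complex.exp (freq n * x)‖ = 1 := by
  simp [Complex.norm_exp, freq_re]

lemma exp_freq_mul_sub_intCast (n m : ℤ) (x : ℝ) :
    Complex.exp (freq n * (x - m : ℝ)) = Complex.exp (freq n * x) := by
  refine Complex.exp_eq_exp_iff_exists_int.mpr ⟨-(n * m), ?_⟩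
  rw [freq]
  push_cast
  ring

lemma bernPoly_eq_bernoulliFun (l : ℕ) (t : ℝ) : bernPoly l t = bernoulliFun l t := by
  rw [bernoulliFun, Polynomial.bernoulli_def, bernPoly, ← sum_range_reflect, Polynomial.eval_map,
    Polynomial.eval₂_finsetSum]
  refine sum_congr rfl fun k hk => ?_
  have hkl : k ≤ l := Nat.lt_succ_iff.mp (mem_range.mp hk)
  rw [Polynomial.eval₂_monomial, Nat.add_sub_cancel, Nat.sub_sub_self hkl, Nat.choose_symm hkl,
    map_mul, eq_ratCast, eq_ratCast, Rat.cast_natCast]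
  ring

lemma hasSum_exp_freq_mul_div_freq_pow {l : ℕ} (hl : 2 ≤ l) {t : ℝ} (ht : t ∈ Set.Icc (0 : ℝ) 1) :
    HasSum (fun n : ℤ => Complex.exp (freq n * t) / freq n ^ l)
      (-(bernPoly l t / l.factorial)) := by
  have hne : (2 * (Real.pi : ℂ) * Complex.I) ^ l ≠ 0 := by simp [Real.pi_ne_zero]
  have hsum := (hasSum_one_div_pow_mul_fourier_mul_bernoulliFun hl ht).div_const
    ((2 * (Real.pi : ℂ) * Complex.I) ^ l)
  rw [← bernPoly_eq_bernoulliFun] at hsum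
  convert! hsum using 1
  · funext n
    rw [fourier_coe_apply, freq, mul_pow (2 * (Real.pi : ℂ) * Complex.I), Complex.ofReal_one,
      div_one, ← div_div, div_right_comm, one_div_mul_eq_div]
  · field_simp

end Fourier

section Laplace

lemma integrableOn_rpow_mul_exp_neg_mul {p c : ℝ} (hp : -1 < p) (hc : 0 < c) :
    IntegrableOn (fun w : ℝ => w ^ p * Real.exp (-(c * w))) (Set.Ioi 0) := by
  simpa [neg_mul] using integrableOn_rpow_mul_exp_neg_mul_rpow hp one_pos hc

lemma integrableOn_cpow_mul_exp_neg_mul {a : ℂ} {c : ℝ} (ha : 0 < a.re) (hc : 0 < c) :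
    IntegrableOn (fun w : ℝ => (w : ℂ) ^ (a - 1) * Complex.exp (-(c * w))) (Set.Ioi 0) := by
  refine Integrable.of_integral_ne_zero ?_
  rw [Complex.integral_cpow_mul_exp_neg_mul_Ioi ha hc]
  refine mul_ne_zero ?_ (Complex.Gamma_ne_zero_of_re_pos ha)
  simp [Complex.cpow_eq_zero_iff, hc.ne']

lemma ofReal_one_div_cpow {x : ℝ} (hx : 0 ≤ x) (a : ℂ) :
    (1 / (x : ℂ)) ^ a = (x : ℂ) ^ (-a) := by
  rw [one_div, Complex.inv_cpow, Complex.cpow_neg]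
  rw [Complex.arg_ofReal_of_nonneg hx]
  exact Real.pi_ne_zero.symm

/-- The integrand in `w` whose Laplace-type integral over `(0, ∞)` produces the part of the `k`-th
numerator of the inverse factorial series carried by the Fourier mode of frequency `b`. -/
noncomputable def laplaceTerm (s : ℂ) (x : ℝ) (b : ℂ) (k : ℕ) (w : ℝ) : ℂ :=
  (w : ℂ) ^ (-s - 2) * Complex.exp (-(x * w)) * (x * w / b * (risingRatio (x * w / b) k - 1))

variable {s b : ℂ} {x : ℝ}

lemma laplaceTerm_eq_sum (k : ℕ) {w : ℝ} (hw : 0 < w) :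
    laplaceTerm s x b k w = ∑ l ∈ Icc 2 (k + 1), (Nat.stirlingFirst (k + 1) l : ℂ) / k.factorial *
      (x / b) ^ l * ((w : ℂ) ^ (l - (s + 1) - 1) * Complex.exp (-(x * w))) := by
  have hw' : (w : ℂ) ≠ 0 := Complex.ofReal_ne_zero.mpr hw.ne'
  rw [laplaceTerm, ← sum_Icc_two_stirlingFirst_mul_pow, mul_sum]
  refine sum_congr rfl fun l _ => ?_
  rw [show (l : ℂ) - (s + 1) - 1 = (-s - 2) + l by ring, Complex.cpow_add _ _ hw',
    Complex.cpow_natCast, mul_div_right_comm (x : ℂ), mul_pow]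
  ring

lemma integrableOn_laplaceTerm_summand (hs : s.re < 1) (hx : 0 < x) {l : ℕ} (hl : 2 ≤ l) (c : ℂ) :
    IntegrableOn (fun w : ℝ => c * ((w : ℂ) ^ (l - (s + 1) - 1) * Complex.exp (-(x * w))))
      (Set.Ioi 0) := by
  refine (integrableOn_cpow_mul_exp_neg_mul ?_ hx).const_mul c
  have : (2 : ℝ) ≤ l := by exact_mod_cast hl
  simp only [Complex.sub_re, Complex.natCast_re, Complex.add_re, Complex.one_re]
  linarith

lemma integrableOn_laplaceTerm (hs : s.re < 1) (hx : 0 < x) (k : ℕ) :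
    IntegrableOn (laplaceTerm s x b k) (Set.Ioi 0) := by
  have hsum : Set.EqOn (laplaceTerm s x b k) _ (Set.Ioi 0) := fun w hw => laplaceTerm_eq_sum k hw
  rw [integrableOn_congr_fun hsum measurableSet_Ioi]
  exact integrable_finsetSum _ fun l hl =>
    integrableOn_laplaceTerm_summand hs hx (mem_Icc.mp hl).1 _

lemma integral_laplaceTerm (hs : s.re < 1) (hx : 0 < x) (k : ℕ) :
    ∫ w in Set.Ioi (0 : ℝ), laplaceTerm s x b k w =
      (x : ℂ) ^ (s + 1) * ∑ l ∈ Icc 2 (k + 1), (Nat.stirlingFirst (k + 1) l : ℂ) / k.factorial *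
        (Complex.Gamma (l - (s + 1)) / b ^ l) := by
  have hx' : (x : ℂ) ≠ 0 := Complex.ofReal_ne_zero.mpr hx.ne'
  rw [setIntegral_congr_fun measurableSet_Ioi fun w hw => laplaceTerm_eq_sum k hw,
    integral_finsetSum _ fun l hl => integrableOn_laplaceTerm_summand hs hx (mem_Icc.mp hl).1 _,
    mul_sum]
  refine sum_congr rfl fun l hl => ?_
  have hl : (2 : ℝ) ≤ l := by exact_mod_cast (mem_Icc.mp hl).1
  have hre : 0 < ((l : ℂ) - (s + 1)).re := by
    simp only [Complex.sub_re, Complex.natCast_re, Complex.add_re, Complex.one_re]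
    linarith
  have hpow : (x / b) ^ l * (1 / (x : ℂ)) ^ ((l : ℂ) - (s + 1)) = (x : ℂ) ^ (s + 1) / b ^ l := by
    rw [ofReal_one_div_cpow hx.le, neg_sub, Complex.cpow_sub _ _ hx', Complex.cpow_natCast,
      div_pow]
    field_simp
  rw [integral_const_mul, Complex.integral_cpow_mul_exp_neg_mul_Ioi hre hx]
  linear_combination (Nat.stirlingFirst (k + 1) l : ℂ) / k.factorial *
    Complex.Gamma (l - (s + 1)) * hpow

lemma pi_mul_norm_div_freq_le {y : ℝ} (hy : 0 ≤ y) (n : ℤ) :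
    Real.pi * ‖(y : ℂ) / freq n‖ ≤ y / 2 := by
  rcases eq_or_ne n 0 with rfl | hn
  · simpa [freq_zero] using div_nonneg hy zero_le_two
  have hn1 : (1 : ℝ) ≤ |(n : ℝ)| := by exact_mod_cast Int.one_le_abs hn
  rw [norm_div, norm_freq, Complex.norm_of_nonneg hy]
  calc Real.pi * (y / (2 * Real.pi * |(n : ℝ)|)) = y / 2 / |(n : ℝ)| := by
        field_simp
    _ ≤ y / 2 := div_le_self (by positivity) hn1

lemma re_ofReal_div_of_re_eq_zero (hb : b.re = 0) (y : ℝ) : ((y : ℂ) / b).re = 0 := by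
  simp [Complex.div_re, hb]

lemma norm_risingRatio_div_freq_sub_one_le {y : ℝ} (hy : 0 ≤ y) (n : ℤ) (k : ℕ) :
    ‖risingRatio ((y : ℂ) / freq n) k - 1‖ ≤
      y / ‖freq n‖ * harmonic k * Real.exp (y / 2) := by
  have hH := harmonic_cast_nonneg k
  calc ‖risingRatio ((y : ℂ) / freq n) k - 1‖
      ≤ ‖(y : ℂ) / freq n‖ * harmonic k * Real.exp (Real.pi * ‖(y : ℂ) / freq n‖) :=
        norm_risingRatio_sub_one_le (re_ofReal_div_of_re_eq_zero (freq_re n) y) k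
    _ ≤ ‖(y : ℂ) / freq n‖ * harmonic k * Real.exp (y / 2) := by
        gcongr
        exact pi_mul_norm_div_freq_le hy n
    _ = y / ‖freq n‖ * harmonic k * Real.exp (y / 2) := by
        rw [norm_div, Complex.norm_of_nonneg hy]

lemma norm_laplaceTerm_freq_le (hx : 0 < x) (n : ℤ) (k : ℕ) {w : ℝ} (hw : 0 < w) :
    ‖laplaceTerm s x (freq n) k w‖ ≤
      x ^ 2 * ‖freq n‖ ^ (-2 : ℝ) * harmonic k * (w ^ (-s.re) * Real.exp (-(x / 2 * w))) := by
  have hxw : 0 ≤ x * w := (mul_pos hx hw).le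
  have hexp : ‖Complex.exp (-(x * w))‖ = Real.exp (-(x * w)) := by
    rw [Complex.norm_exp]
    simp
  have hcpow : ‖(w : ℂ) ^ (-s - 2)‖ = w ^ (-s.re) * w ^ (-2 : ℝ) := by
    rw [Complex.norm_cpow_eq_rpow_re_of_pos hw, ← Real.rpow_add hw]
    simp [sub_eq_add_neg]
  have hsplit : Real.exp (-(x / 2 * w)) = Real.exp (-(x * w)) * Real.exp (x * w / 2) := by
    rw [← Real.exp_add]
    ring_nf
  have hratio := norm_risingRatio_div_freq_sub_one_le hxw n k
  rw [laplaceTerm, ← Complex.ofReal_mul, norm_mul, norm_mul, norm_mul, Complex.ofReal_mul, hexp,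
    ← Complex.ofReal_mul, norm_div, Complex.norm_of_nonneg hxw, hcpow, hsplit]
  calc w ^ (-s.re) * w ^ (-2 : ℝ) * Real.exp (-(x * w)) *
        (x * w / ‖freq n‖ * ‖risingRatio (((x * w : ℝ) : ℂ) / freq n) k - 1‖)
      ≤ w ^ (-s.re) * w ^ (-2 : ℝ) * Real.exp (-(x * w)) *
        (x * w / ‖freq n‖ * (x * w / ‖freq n‖ * harmonic k * Real.exp (x * w / 2))) := by
        gcongr
    _ = _ := by
        rw [Real.rpow_neg hw.le 2, Real.rpow_neg (norm_nonneg _), Real.rpow_two, Real.rpow_two]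
        field_simp

lemma integral_norm_laplaceTerm_freq_le (hs : s.re < 1) (hx : 0 < x) (n : ℤ) (k : ℕ) :
    ∫ w in Set.Ioi (0 : ℝ), ‖laplaceTerm s x (freq n) k w‖ ≤
      x ^ 2 * ‖freq n‖ ^ (-2 : ℝ) * harmonic k *
        ∫ w in Set.Ioi (0 : ℝ), w ^ (-s.re) * Real.exp (-(x / 2 * w)) := by
  rw [← integral_const_mul]
  exact setIntegral_mono_on (integrableOn_laplaceTerm hs hx k).norm
    ((integrableOn_rpow_mul_exp_neg_mul (by linarith) (half_pos hx)).const_mul _)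
    measurableSet_Ioi fun w hw => norm_laplaceTerm_freq_le hx n k hw

lemma hasSum_factorialWeight_mul_laplaceTerm (hb : b.re = 0) (hx : 0 < x) {w : ℝ} (hw : 0 < w) :
    HasSum (fun k => factorialWeight (x : ℂ) k * laplaceTerm s x b k w)
      ((w : ℂ) ^ (-s) * Complex.exp (-(x * w)) / (b * (b - w))) := by
  have hw' : (w : ℂ) ≠ 0 := Complex.ofReal_ne_zero.mpr hw.ne'
  have hx' : (x : ℂ) ≠ 0 := Complex.ofReal_ne_zero.mpr hx.ne'
  have hre := re_ofReal_div_of_re_eq_zero hb (x * w)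
  rw [Complex.ofReal_mul] at hre
  have hsum := (hasSum_risingRatio_sub_one_mul_factorialWeight hx hre).mul_left
    ((w : ℂ) ^ (-s - 2) * Complex.exp (-(x * w)) * (x * w / b))
  have hval : x * w / b * (1 / (x - x * w / b) - 1 / x) = (w : ℂ) ^ 2 / (b * (b - w)) := by
    rcases eq_or_ne b 0 with rfl | hb₀
    · simp
    have hbw : b - w ≠ 0 := fun h => hw.ne' (by simpa [hb] using congrArg Complex.re h)
    have hdenom : (x : ℂ) - x * w / b = x * (b - w) / b := by field_simp
    rw [hdenom]
    field_simp
    ring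
  have hcpow : (w : ℂ) ^ (-s) = (w : ℂ) ^ (-s - 2) * (w : ℂ) ^ 2 := by
    rw [← Complex.cpow_ofNat, ← Complex.cpow_add _ _ hw', sub_add_cancel]
  convert! hsum using 1
  · funext k
    rw [laplaceTerm]
    ring
  · rw [mul_assoc _ (x * w / b : ℂ), hval, hcpow]
    ring

end Laplace

section Exchange

/-- The integrand in `w` of the contribution of the `n`-th Fourier mode to the defect of the
Euler–Maclaurin approximation of `∑ k ^ s`. Differentiating in `x` cancels `freq n - w`. -/
noncomputable def modeKernel (s : ℂ) (n : ℤ) (x w : ℝ) : ℂ :=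
  (w : ℂ) ^ (-s) * Complex.exp ((freq n - w) * x) / (freq n * (freq n - w))

/-- The contribution of the `n`-th Fourier mode to the defect of the Euler–Maclaurin approximation
of `∑ k ^ s`, up to the factor `s / Γ(1 - s)`. -/
noncomputable def modeIntegral (s : ℂ) (n : ℤ) (x : ℝ) : ℂ :=
  ∫ w in Set.Ioi (0 : ℝ), modeKernel s n x w

/-- The sum of the contributions of all Fourier modes. -/
noncomputable def modeSum (s : ℂ) (x : ℝ) : ℂ := ∑' n : ℤ, modeIntegral s n x

variable {s : ℂ} {x : ℝ}

lemma norm_integral_laplaceTerm_freq_le (hs : s.re < 1) (hx : 0 < x) (n : ℤ) (k : ℕ) :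
    ‖∫ w in Set.Ioi (0 : ℝ), laplaceTerm s x (freq n) k w‖ ≤
      x ^ 2 * ‖freq n‖ ^ (-2 : ℝ) * harmonic k *
        ∫ w in Set.Ioi (0 : ℝ), w ^ (-s.re) * Real.exp (-(x / 2 * w)) :=
  (norm_integral_le_integral_norm _).trans (integral_norm_laplaceTerm_freq_le hs hx n k)

lemma summable_factorialWeight_mul_exp_mul_integral_laplaceTerm (hs : s.re < 1) (hx : 0 < x) :
    Summable fun p : ℕ × ℤ => factorialWeight (x : ℂ) p.1 * (Complex.exp (freq p.2 * x) *
      ∫ w in Set.Ioi (0 : ℝ), laplaceTerm s x (freq p.2) p.1 w) := by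
  set C := ∫ w in Set.Ioi (0 : ℝ), w ^ (-s.re) * Real.exp (-(x / 2 * w))
  have hprod := (summable_harmonic_mul_factorialWeight hx).mul_of_nonneg
    (summable_norm_freq_rpow (p := -2) (by norm_num))
    (fun k => mul_nonneg (harmonic_cast_nonneg k) (factorialWeight_pos hx.le k).le)
    (fun n => by positivity)
  refine .of_norm_bounded (hprod.mul_left (x ^ 2 * C)) fun ⟨k, n⟩ => ?_
  rw [norm_mul, norm_mul, norm_exp_freq_mul, one_mul, norm_factorialWeight hx.le]
  calc factorialWeight x k * ‖∫ w in Set.Ioi (0 : ℝ), laplaceTerm s x (freq n) k w‖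
      ≤ factorialWeight x k * (x ^ 2 * ‖freq n‖ ^ (-2 : ℝ) * harmonic k * C) :=
        mul_le_mul_of_nonneg_left (norm_integral_laplaceTerm_freq_le hs hx n k)
          (factorialWeight_pos hx.le k).le
    _ = x ^ 2 * C * (harmonic k * factorialWeight x k * ‖freq n‖ ^ (-2 : ℝ)) := by ring

lemma hasSum_factorialWeight_mul_integral_laplaceTerm (hs : s.re < 1) (hx : 0 < x) (n : ℤ) :
    HasSum (fun k => factorialWeight (x : ℂ) k *
        (Complex.exp (freq n * x) * ∫ w in Set.Ioi (0 : ℝ), laplaceTerm s x (freq n) k w))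
      (modeIntegral s n x) := by
  set F : ℕ → ℝ → ℂ := fun k w => factorialWeight (x : ℂ) k * laplaceTerm s x (freq n) k w
  have hF : ∀ k, IntegrableOn (F k) (Set.Ioi 0) := fun k =>
    (integrableOn_laplaceTerm hs hx k).const_mul _
  have hnorm : Summable fun k => ∫ w in Set.Ioi (0 : ℝ), ‖F k w‖ := by
    refine .of_nonneg_of_le (fun k => integral_nonneg fun w => norm_nonneg _) (fun k => ?_)
      ((summable_harmonic_mul_factorialWeight hx).mul_left (x ^ 2 * ‖freq n‖ ^ (-2 : ℝ) *
        ∫ w in Set.Ioi (0 : ℝ), w ^ (-s.re) * Real.exp (-(x / 2 * w))))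
    simp only [F, norm_mul, norm_factorialWeight hx.le, integral_const_mul]
    have := mul_le_mul_of_nonneg_left (integral_norm_laplaceTerm_freq_le hs hx n k)
      (factorialWeight_pos hx.le k).le
    linarith
  convert! (hasSum_integral_of_summable_integral_norm hF hnorm).mul_left
    (Complex.exp (freq n * x)) using 1
  · funext k
    simp only [F, integral_const_mul]
    ring
  · rw [modeIntegral, ← integral_const_mul]
    refine setIntegral_congr_fun measurableSet_Ioi fun w hw => ?_
    simp only [F, (hasSum_factorialWeight_mul_laplaceTerm (freq_re n) hx hw).tsum_eq]
    rw [modeKernel, sub_mul, sub_eq_add_neg, Complex.exp_add, mul_comm (w : ℂ) x]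
    ring

lemma exp_freq_mul_fract (n : ℤ) (x : ℝ) :
    Complex.exp (freq n * Int.fract x) = Complex.exp (freq n * x) :=
  exp_freq_mul_sub_intCast n ⌊x⌋ x

lemma hasSum_exp_mul_integral_laplaceTerm (hs : s.re < 1) (hx : 0 < x) (k : ℕ) :
    HasSum (fun n : ℤ =>
        Complex.exp (freq n * x) * ∫ w in Set.Ioi (0 : ℝ), laplaceTerm s x (freq n) k w)
      (-(x : ℂ) ^ (s + 1) * ∑ l ∈ Icc 2 (k + 1), (Nat.stirlingFirst (k + 1) l : ℂ) / k.factorial *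
        (Complex.Gamma (l - (s + 1)) * (bernPoly l (Int.fract x) / l.factorial))) := by
  have hfract : Int.fract x ∈ Set.Icc (0 : ℝ) 1 := ⟨Int.fract_nonneg x, (Int.fract_lt_one x).le⟩
  have hsum := (hasSum_sum (s := Icc 2 (k + 1)) fun l hl => (hasSum_exp_freq_mul_div_freq_pow
    (mem_Icc.mp hl).1 hfract).mul_left ((Nat.stirlingFirst (k + 1) l : ℂ) / k.factorial *
      Complex.Gamma (l - (s + 1)))).mul_left ((x : ℂ) ^ (s + 1))
  convert! hsum using 1
  · funext n
    rw [integral_laplaceTerm hs hx, mul_left_comm, mul_sum]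
    refine congrArg _ (sum_congr rfl fun l _ => ?_)
    rw [exp_freq_mul_fract]
    ring
  · rw [neg_mul, ← mul_neg, ← sum_neg_distrib]
    refine congrArg _ (sum_congr rfl fun l _ => ?_)
    ring

lemma hasSum_factorialWeight_mul_sum_stirlingFirst (hs : s.re < 1) (hx : 0 < x) :
    HasSum (fun k => factorialWeight (x : ℂ) k * (-(x : ℂ) ^ (s + 1) *
        ∑ l ∈ Icc 2 (k + 1), (Nat.stirlingFirst (k + 1) l : ℂ) / k.factorial *
          (Complex.Gamma (l - (s + 1)) * (bernPoly l (Int.fract x) / l.factorial))))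
      (modeSum s x) := by
  have hdouble := (summable_factorialWeight_mul_exp_mul_integral_laplaceTerm hs hx).hasSum
  have hmode := ((Equiv.prodComm ℤ ℕ).hasSum_iff.mpr hdouble).prod_fiberwise fun n =>
    hasSum_factorialWeight_mul_integral_laplaceTerm hs hx n
  rw [modeSum, hmode.tsum_eq]
  exact hdouble.prod_fiberwise fun k =>
    (hasSum_exp_mul_integral_laplaceTerm hs hx k).mul_left (factorialWeight (x : ℂ) k)

lemma add_one_ne_natCast (hs₀ : 0 < s.re) (hs₁ : s.re < 1) (m : ℕ) : s + 1 ≠ m := by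
  intro hm
  have hre : s.re + 1 = m := by simpa using congrArg Complex.re hm
  have h₁ : 1 < m := by exact_mod_cast (by linarith : (1 : ℝ) < m)
  have h₂ : m < 2 := by exact_mod_cast (by linarith : (m : ℝ) < 2)
  omega

lemma hasSum_faulhaberTerm (hs₀ : 0 < s.re) (hs₁ : s.re < 1) (hx : 0 < x) :
    HasSum (faulhaberTerm (s + 1) x)
      (-((s + 1) * bernPoly 1 (Int.fract x)) / x -
        modeSum s x / ((x : ℂ) ^ (s + 1) * Complex.Gamma (-(s + 1)))) := by
  have hpow : (x : ℂ) ^ (s + 1) ≠ 0 := by simp [Complex.cpow_eq_zero_iff, hx.ne']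
  have hlinear := (hasSum_factorialWeight hx).mul_right
    (-((s + 1) * bernPoly 1 (Int.fract x) : ℂ))
  have hmode := (hasSum_factorialWeight_mul_sum_stirlingFirst hs₁ hx).div_const
    ((x : ℂ) ^ (s + 1) * Complex.Gamma (-(s + 1)))
  convert! hlinear.sub hmode using 1
  · funext k
    rw [faulhaberTerm_eq (add_one_ne_natCast hs₀ hs₁)]
    field_simp
    ring
  · ring

end Exchange

section ModeSum

variable {s : ℂ} {x : ℝ} {n : ℤ}

lemma freq_sub_ofReal_ne_zero (hn : n ≠ 0) (w : ℝ) : freq n - w ≠ 0 := by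
  intro h
  simpa [freq, Real.pi_ne_zero, hn] using congrArg Complex.im h

lemma norm_freq_le_norm_freq_sub (n : ℤ) (w : ℝ) : ‖freq n‖ ≤ ‖freq n - w‖ := by
  have him : |(freq n - w).im| = ‖freq n‖ := by
    rw [norm_freq]
    simp [freq, abs_mul, abs_of_pos Real.pi_pos]
  exact him ▸ Complex.abs_im_le_norm _

lemma le_norm_freq_sub (n : ℤ) (w : ℝ) : w ≤ ‖freq n - w‖ := by
  have hre : |(freq n - w).re| = |w| := by simp [freq_re]
  exact (le_abs_self w).trans (hre ▸ Complex.abs_re_le_norm _)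

lemma one_le_norm_freq (hn : n ≠ 0) : 1 ≤ ‖freq n‖ := by
  have habs : (1 : ℝ) ≤ |(n : ℝ)| := by exact_mod_cast Int.one_le_abs hn
  rw [norm_freq]
  nlinarith [Real.two_le_pi]

lemma norm_exp_freq_sub_mul (n : ℤ) (x w : ℝ) :
    ‖Complex.exp ((freq n - w) * x)‖ = Real.exp (-(x * w)) := by
  simp [Complex.norm_exp, freq_re, mul_comm]

/-- The profile in `w` of a bound for `modeKernel s n x w` with `s.re = σ`, the bound being
this profile times `‖freq n‖ ^ (-(1 + σ / 2))`. The exponent `σ / 2` splits the decay of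
`1 / (freq n - w)` so that both the integral in `w` and the sum over `n` converge. -/
noncomputable def modeProfile (σ w : ℝ) : ℝ := w ^ (-σ) * max 1 w ^ (-(1 - σ / 2))

lemma integrableOn_modeProfile {σ : ℝ} (hσ₀ : 0 < σ) (hσ₁ : σ < 1) :
    IntegrableOn (modeProfile σ) (Set.Ioi 0) := by
  rw [← Set.Ioc_union_Ioi_eq_Ioi (zero_le_one' ℝ)]
  refine IntegrableOn.union ?_ ?_
  · have hpow : IntegrableOn (fun w : ℝ => w ^ (-σ)) (Set.Ioc 0 1) :=
      (intervalIntegrable_iff_integrableOn_Ioc_of_le zero_le_one).mp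
        (intervalIntegral.intervalIntegrable_rpow' (by linarith))
    refine hpow.congr_fun (fun w hw => ?_) measurableSet_Ioc
    simp [modeProfile, max_eq_left hw.2]
  · have hpow := integrableOn_Ioi_rpow_of_lt (a := -σ + -(1 - σ / 2)) (by linarith) one_pos
    refine hpow.congr_fun (fun w hw => ?_) measurableSet_Ioi
    rw [modeProfile, max_eq_right (le_of_lt hw), ← Real.rpow_add (one_pos.trans hw)]

lemma modeKernel_zero (s : ℂ) (x w : ℝ) : modeKernel s 0 x w = 0 := by simp [modeKernel, freq_zero]

lemma norm_modeKernel_le (hs₀ : 0 < s.re) (hs₁ : s.re < 1) (n : ℤ) (hx : 0 ≤ x) {w : ℝ}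
    (hw : 0 < w) :
    ‖modeKernel s n x w‖ ≤ ‖freq n‖ ^ (-(1 + s.re / 2)) * modeProfile s.re w := by
  have hmax : 0 < max 1 w := lt_max_of_lt_left one_pos
  rcases eq_or_ne n 0 with rfl | hn
  · rw [modeKernel_zero, norm_zero, modeProfile]
    positivity
  have hfreq : 0 < ‖freq n‖ := one_pos.trans_le (one_le_norm_freq hn)
  set M := ‖freq n - w‖
  have hfreqM : ‖freq n‖ ≤ M := norm_freq_le_norm_freq_sub n w
  have hmaxM : max 1 w ≤ M := max_le ((one_le_norm_freq hn).trans hfreqM) (le_norm_freq_sub n w)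
  have hM : 0 < M := hfreq.trans_le hfreqM
  have hsplit : ‖freq n‖ ^ (s.re / 2) * max 1 w ^ (1 - s.re / 2) ≤ M := by
    calc ‖freq n‖ ^ (s.re / 2) * max 1 w ^ (1 - s.re / 2)
        ≤ M ^ (s.re / 2) * M ^ (1 - s.re / 2) := by
          gcongr
          linarith
      _ = M := by rw [← Real.rpow_add hM, add_sub_cancel, Real.rpow_one]
  calc ‖modeKernel s n x w‖
      = w ^ (-s.re) * Real.exp (-(x * w)) / (‖freq n‖ * M) := by
        rw [modeKernel, norm_div, norm_mul, norm_mul, norm_exp_freq_sub_mul,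
          Complex.norm_cpow_eq_rpow_re_of_pos hw, Complex.neg_re]
    _ ≤ w ^ (-s.re) * 1 / (‖freq n‖ * (‖freq n‖ ^ (s.re / 2) * max 1 w ^ (1 - s.re / 2))) := by
        gcongr
        exact Real.exp_le_one_iff.mpr (neg_nonpos.mpr (by positivity))
    _ = ‖freq n‖ ^ (-(1 + s.re / 2)) * modeProfile s.re w := by
        rw [modeProfile, Real.rpow_neg hfreq.le, Real.rpow_neg hmax.le, Real.rpow_add hfreq,
          Real.rpow_one]
        field_simp

lemma ae_norm_modeKernel_le (hs₀ : 0 < s.re) (hs₁ : s.re < 1) (n : ℤ) (hx : 0 ≤ x) :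
    ∀ᵐ w ∂volume.restrict (Set.Ioi 0),
      ‖modeKernel s n x w‖ ≤ ‖freq n‖ ^ (-(1 + s.re / 2)) * modeProfile s.re w :=
  (ae_restrict_mem measurableSet_Ioi).mono fun _ hw => norm_modeKernel_le hs₀ hs₁ n hx hw

lemma aestronglyMeasurable_modeKernel (s : ℂ) (n : ℤ) (x : ℝ) :
    AEStronglyMeasurable (modeKernel s n x) (volume.restrict (Set.Ioi 0)) := by
  have hmeas : Measurable (modeKernel s n x) := by
    unfold modeKernel
    fun_prop
  exact hmeas.aestronglyMeasurable

lemma integrableOn_modeKernel (hs₀ : 0 < s.re) (hs₁ : s.re < 1) (n : ℤ) (hx : 0 ≤ x) :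
    IntegrableOn (modeKernel s n x) (Set.Ioi 0) :=
  ((integrableOn_modeProfile hs₀ hs₁).const_mul _).mono'
    (aestronglyMeasurable_modeKernel s n x) (ae_norm_modeKernel_le hs₀ hs₁ n hx)

lemma continuousOn_modeIntegral (hs₀ : 0 < s.re) (hs₁ : s.re < 1) (n : ℤ) :
    ContinuousOn (modeIntegral s n) (Set.Ici 0) := by
  refine continuousOn_of_dominated (fun x _ => aestronglyMeasurable_modeKernel s n x)
    (fun x hx => ae_norm_modeKernel_le hs₀ hs₁ n hx)
    ((integrableOn_modeProfile hs₀ hs₁).const_mul _) (.of_forall fun w => ?_)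
  unfold modeKernel
  fun_prop

lemma norm_modeIntegral_le (hs₀ : 0 < s.re) (hs₁ : s.re < 1) (n : ℤ) (hx : 0 ≤ x) :
    ‖modeIntegral s n x‖ ≤
      ‖freq n‖ ^ (-(1 + s.re / 2)) * ∫ w in Set.Ioi (0 : ℝ), modeProfile s.re w := by
  rw [← integral_const_mul]
  exact norm_integral_le_of_norm_le ((integrableOn_modeProfile hs₀ hs₁).const_mul _)
    (ae_norm_modeKernel_le hs₀ hs₁ n hx)

lemma summable_modeIntegral_bound (hs₀ : 0 < s.re) :
    Summable fun n : ℤ =>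
      ‖freq n‖ ^ (-(1 + s.re / 2)) * ∫ w in Set.Ioi (0 : ℝ), modeProfile s.re w :=
  (summable_norm_freq_rpow (by linarith)).mul_right _

lemma summable_modeIntegral (hs₀ : 0 < s.re) (hs₁ : s.re < 1) (hx : 0 ≤ x) :
    Summable fun n => modeIntegral s n x :=
  .of_norm_bounded (summable_modeIntegral_bound hs₀) fun n => norm_modeIntegral_le hs₀ hs₁ n hx

lemma continuousOn_modeSum (hs₀ : 0 < s.re) (hs₁ : s.re < 1) :
    ContinuousOn (modeSum s) (Set.Ici 0) :=
  continuousOn_tsum (continuousOn_modeIntegral hs₀ hs₁) (summable_modeIntegral_bound hs₀)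
    fun n _ hx => norm_modeIntegral_le hs₀ hs₁ n hx

lemma hasDerivAt_modeKernel (hn : n ≠ 0) (x w : ℝ) :
    HasDerivAt (fun y => modeKernel s n y w)
      ((w : ℂ) ^ (-s) * Complex.exp ((freq n - w) * x) / freq n) x := by
  have hexp : HasDerivAt (fun y : ℝ => Complex.exp ((freq n - w) * y))
      (Complex.exp ((freq n - w) * x) * ((freq n - w) * 1)) x :=
    ((hasDerivAt_id x).ofReal_comp.const_mul (freq n - w)).cexp
  refine ((hexp.const_mul ((w : ℂ) ^ (-s))).div_const (freq n * (freq n - w))).congr_deriv ?_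
  have := freq_sub_ofReal_ne_zero hn w
  have := freq_ne_zero hn
  field_simp

lemma integral_cpow_mul_exp_freq_sub_mul_div (hs : s.re < 1) (hx : 0 < x) (n : ℤ) :
    ∫ w in Set.Ioi (0 : ℝ), (w : ℂ) ^ (-s) * Complex.exp ((freq n - w) * x) / freq n =
      Complex.Gamma (1 - s) * (x : ℂ) ^ (s - 1) * (Complex.exp (freq n * x) / freq n) := by
  have hGamma := Complex.integral_cpow_mul_exp_neg_mul_Ioi (a := 1 - s) (by simpa using hs) hx
  rw [ofReal_one_div_cpow hx.le, neg_sub, sub_sub_cancel_left] at hGamma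
  rw [mul_comm (Complex.Gamma _), ← hGamma, ← integral_mul_const]
  refine setIntegral_congr_fun measurableSet_Ioi fun w _ => ?_
  rw [sub_mul, sub_eq_add_neg, Complex.exp_add, mul_comm (w : ℂ) x]
  ring

lemma hasDerivAt_modeIntegral (hs₀ : 0 < s.re) (hs₁ : s.re < 1) (n : ℤ) (hx : 0 < x) :
    HasDerivAt (modeIntegral s n)
      (Complex.Gamma (1 - s) * (x : ℂ) ^ (s - 1) * (Complex.exp (freq n * x) / freq n)) x := by
  rcases eq_or_ne n 0 with rfl | hn
  · have hzero : modeIntegral s 0 = fun _ => 0 := by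
      funext y
      simp [modeIntegral, modeKernel_zero]
    simpa [hzero, freq_zero] using hasDerivAt_const x (0 : ℂ)
  rw [← integral_cpow_mul_exp_freq_sub_mul_div hs₁ hx n]
  refine (hasDerivAt_integral_of_dominated_loc_of_deriv_le (s := Set.Ioi (x / 2))
    (bound := fun w => w ^ (-s.re) * Real.exp (-(x / 2 * w)) / ‖freq n‖)
    (F' := fun y w => (w : ℂ) ^ (-s) * Complex.exp ((freq n - w) * y) / freq n)
    (Ioi_mem_nhds (half_lt_self hx)) (.of_forall (aestronglyMeasurable_modeKernel s n))
    (integrableOn_modeKernel hs₀ hs₁ n hx.le) ?_ ?_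
    ((integrableOn_rpow_mul_exp_neg_mul (by linarith) (half_pos hx)).div_const _)
    (.of_forall fun w y _ => hasDerivAt_modeKernel hn y w)).2
  · fun_prop
  · filter_upwards [ae_restrict_mem measurableSet_Ioi] with w hw y hy
    rw [Set.mem_Ioi] at hw hy
    rw [norm_div, norm_mul, norm_exp_freq_sub_mul, Complex.norm_cpow_eq_rpow_re_of_pos hw,
      Complex.neg_re]
    gcongr

end ModeSum

section Defect

variable {s : ℂ} {x : ℝ} {m : ℕ}

lemma hasSum_exp_freq_mul_div_freq_sq (hx : x ∈ Set.Icc (m : ℝ) (m + 1)) :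
    HasSum (fun n : ℤ => Complex.exp (freq n * x) / freq n ^ 2)
      (-(((x - m) ^ 2 - (x - m) + 6⁻¹) / 2)) := by
  have hsum := hasSum_exp_freq_mul_div_freq_pow (l := 2) le_rfl (t := x - m)
    ⟨by linarith [hx.1], by linarith [hx.2]⟩
  convert! hsum using 1
  · funext n
    rw [← exp_freq_mul_sub_intCast n m x, Int.cast_natCast]
  · rw [bernPoly_eq_bernoulliFun, bernoulliFun_two]
    push_cast
    norm_num

/-- The integral `modeIntegral s n x` minus its leading oscillation. Its derivatives, unlike those
of `modeIntegral`, are absolutely summable over `n`. -/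
noncomputable def dampedMode (s : ℂ) (n : ℤ) (x : ℝ) : ℂ :=
  modeIntegral s n x -
    Complex.Gamma (1 - s) * (x : ℂ) ^ (s - 1) * (Complex.exp (freq n * x) / freq n ^ 2)

lemma hasDerivAt_exp_freq_mul (n : ℤ) (x : ℝ) :
    HasDerivAt (fun y : ℝ => Complex.exp (freq n * y)) (Complex.exp (freq n * x) * freq n) x := by
  simpa using ((hasDerivAt_id x).ofReal_comp.const_mul (freq n)).cexp

lemma ne_one_of_re_lt_one (hs : s.re < 1) : s ≠ 1 := by
  rintro rfl
  simp at hs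

lemma hasDerivAt_dampedMode (hs₀ : 0 < s.re) (hs₁ : s.re < 1) (n : ℤ) (hx : 0 < x) :
    HasDerivAt (dampedMode s n)
      (Complex.Gamma (1 - s) * ((1 - s) * (x : ℂ) ^ (s - 2)) *
        (Complex.exp (freq n * x) / freq n ^ 2)) x := by
  have hpow := hasDerivAt_ofReal_cpow_const hx.ne' (sub_ne_zero.mpr (ne_one_of_re_lt_one hs₁))
  refine ((hasDerivAt_modeIntegral hs₀ hs₁ n hx).sub ((hpow.const_mul (Complex.Gamma (1 - s))).mul
    ((hasDerivAt_exp_freq_mul n x).div_const (freq n ^ 2)))).congr_deriv ?_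
  rw [sub_sub, one_add_one_eq_two]
  rcases eq_or_ne n 0 with rfl | hn
  · simp [freq_zero]
  · have := freq_ne_zero hn
    field_simp
    ring

lemma hasSum_dampedMode (hs₀ : 0 < s.re) (hs₁ : s.re < 1) (hx : x ∈ Set.Icc (m : ℝ) (m + 1)) :
    HasSum (fun n => dampedMode s n x) (modeSum s x -
      Complex.Gamma (1 - s) * (x : ℂ) ^ (s - 1) * (-(((x - m) ^ 2 - (x - m) + 6⁻¹) / 2))) :=
  (summable_modeIntegral hs₀ hs₁ ((Nat.cast_nonneg m).trans hx.1)).hasSum.sub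
    ((hasSum_exp_freq_mul_div_freq_sq hx).mul_left _)

lemma norm_cpow_sub_two_le (hs : s.re < 1) {a y : ℝ} (ha : 0 < a) (hay : a < y) :
    ‖(y : ℂ) ^ (s - 2)‖ ≤ a ^ (s.re - 2) := by
  rw [Complex.norm_cpow_eq_rpow_re_of_pos (ha.trans hay), Complex.sub_re, Complex.re_ofNat]
  exact Real.rpow_le_rpow_of_nonpos ha hay.le (by linarith)

lemma hasDerivAt_tsum_dampedMode (hs₀ : 0 < s.re) (hs₁ : s.re < 1)
    (hx₀ : 0 < x) (hx : x ∈ Set.Icc (m : ℝ) (m + 1)) :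
    HasDerivAt (fun y => ∑' n, dampedMode s n y)
      (Complex.Gamma (1 - s) * ((1 - s) * (x : ℂ) ^ (s - 2)) *
        (-(((x - m) ^ 2 - (x - m) + 6⁻¹) / 2))) x := by
  rw [← (hasSum_exp_freq_mul_div_freq_sq hx).tsum_eq, ← tsum_mul_left]
  refine hasDerivAt_tsum_of_isPreconnected (t := Set.Ioi (x / 2)) (y₀ := x)
    (u := fun n => ‖Complex.Gamma (1 - s)‖ * (‖1 - s‖ * (x / 2) ^ (s.re - 2)) *
      ‖freq n‖ ^ (-2 : ℝ))
    ((summable_norm_freq_rpow (by norm_num)).mul_left _) isOpen_Ioi isPreconnected_Ioi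
    (fun n y hy => hasDerivAt_dampedMode hs₀ hs₁ n ((half_pos hx₀).trans hy)) (fun n y hy => ?_)
    (half_lt_self hx₀) (hasSum_dampedMode hs₀ hs₁ hx).summable (half_lt_self hx₀)
  rw [norm_mul, norm_mul, norm_mul, norm_div, norm_exp_freq_mul, norm_pow,
    Real.rpow_neg (norm_nonneg _), Real.rpow_two, one_div]
  gcongr
  exact norm_cpow_sub_two_le hs₁ (half_pos hx₀) hy

lemma hasDerivAt_modeSum (hs₀ : 0 < s.re) (hs₁ : s.re < 1) (hx : x ∈ Set.Ioo (m : ℝ) (m + 1)) :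
    HasDerivAt (modeSum s)
      (-(Complex.Gamma (1 - s) * (x : ℂ) ^ (s - 1) * (x - m - 1 / 2))) x := by
  have hx₀ : 0 < x := (Nat.cast_nonneg m).trans_lt hx.1
  have hpow := hasDerivAt_ofReal_cpow_const hx₀.ne' (sub_ne_zero.mpr (ne_one_of_re_lt_one hs₁))
  have hshift : HasDerivAt (fun y : ℝ => (y : ℂ) - m) 1 x :=
    (hasDerivAt_id x).ofReal_comp.sub_const _
  have hbernoulli := ((((hshift.pow 2).sub hshift).add_const 6⁻¹).div_const 2).neg
  have hsum := (hasDerivAt_tsum_dampedMode hs₀ hs₁ hx₀ (Set.Ioo_subset_Icc_self hx)).add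
    ((hpow.const_mul (Complex.Gamma (1 - s))).mul hbernoulli)
  refine (hsum.congr_deriv ?_).congr_of_eventuallyEq ?_
  · simp only [Pi.neg_apply, Pi.sub_apply, Pi.pow_apply]
    rw [sub_sub s, one_add_one_eq_two]
    push_cast
    ring
  · filter_upwards [Ioo_mem_nhds hx.1 hx.2] with y hy
    simp [(hasSum_dampedMode hs₀ hs₁ (Set.Ioo_subset_Icc_self hy)).tsum_eq]

/-- The defect of the Euler–Maclaurin approximation of `∑ k ∈ Icc 1 m, k ^ s` on `[m, m + 1]`,
corrected by the Fourier modes. It turns out not to depend on `m` and `x`. -/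
noncomputable def defect (s : ℂ) (m : ℕ) (x : ℝ) : ℂ :=
  ∑ k ∈ Icc 1 m, (k : ℂ) ^ s - (x : ℂ) ^ (s + 1) / (s + 1) + (x - m - 1 / 2) * (x : ℂ) ^ s +
    s / Complex.Gamma (1 - s) * modeSum s x

lemma ne_zero_of_re_pos (hs : 0 < s.re) : s ≠ 0 := by
  rintro rfl
  simp at hs

lemma continuousOn_defect (hs₀ : 0 < s.re) (hs₁ : s.re < 1) (m : ℕ) :
    ContinuousOn (defect s m) (Set.Icc m (m + 1)) := by
  have hsub : Set.Icc (m : ℝ) (m + 1) ⊆ Set.Ici 0 := fun y hy => (Nat.cast_nonneg m).trans hy.1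
  have hsucc : Continuous fun y : ℝ => (y : ℂ) ^ (s + 1) :=
    Complex.continuous_ofReal_cpow_const (by simpa using by linarith)
  have hpow : Continuous fun y : ℝ => (y : ℂ) ^ s := Complex.continuous_ofReal_cpow_const hs₀
  exact (by fun_prop : Continuous fun y : ℝ => ∑ k ∈ Icc 1 m, (k : ℂ) ^ s -
    (y : ℂ) ^ (s + 1) / (s + 1) + (y - m - 1 / 2) * (y : ℂ) ^ s).continuousOn.add
    (((continuousOn_modeSum hs₀ hs₁).mono hsub).const_mul _)

lemma hasDerivAt_defect (hs₀ : 0 < s.re) (hs₁ : s.re < 1) (hx : x ∈ Set.Ioo (m : ℝ) (m + 1)) :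
    HasDerivAt (defect s m) 0 x := by
  have hx₀ : 0 < x := (Nat.cast_nonneg m).trans_lt hx.1
  have hGamma : Complex.Gamma (1 - s) ≠ 0 :=
    Complex.Gamma_ne_zero_of_re_pos (by simpa using hs₁)
  have hs : s ≠ -1 := by
    rintro rfl
    norm_num at hs₀
  have hsucc := hasDerivAt_ofReal_cpow_const' hx₀.ne' hs
  have hpow := hasDerivAt_ofReal_cpow_const hx₀.ne' (ne_zero_of_re_pos hs₀)
  have hlin : HasDerivAt (fun y : ℝ => (y : ℂ) - m - 1 / 2) 1 x :=
    ((hasDerivAt_id x).ofReal_comp.sub_const _).sub_const _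
  refine (((hsucc.const_sub (∑ k ∈ Icc 1 m, (k : ℂ) ^ s)).add (hlin.mul hpow)).add
    ((hasDerivAt_modeSum hs₀ hs₁ hx).const_mul (s / Complex.Gamma (1 - s)))).congr_deriv ?_
  field_simp
  ring

lemma defect_eq_defect_natCast (hs₀ : 0 < s.re) (hs₁ : s.re < 1)
    (hx : x ∈ Set.Icc (m : ℝ) (m + 1)) : defect s m x = defect s m m := by
  have hint := intervalIntegral.integral_eq_sub_of_hasDerivAt_of_le hx.1
    ((continuousOn_defect hs₀ hs₁ m).mono (Set.Icc_subset_Icc_right hx.2)) (f' := fun _ => 0)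
    (fun y hy => hasDerivAt_defect hs₀ hs₁ ⟨hy.1, hy.2.trans_le hx.2⟩) (by simp)
  rw [intervalIntegral.integral_zero] at hint
  exact sub_eq_zero.mp hint.symm

lemma defect_succ_natCast_succ (s : ℂ) (m : ℕ) :
    defect s (m + 1) (m + 1 : ℕ) = defect s m (m + 1 : ℕ) := by
  rw [defect, defect, sum_Icc_succ_top (by omega)]
  push_cast
  ring

lemma defect_natCast (hs₀ : 0 < s.re) (hs₁ : s.re < 1) (m : ℕ) :
    defect s m m = s / Complex.Gamma (1 - s) * modeSum s 0 := by
  induction m with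
  | zero =>
    have hs : s + 1 ≠ 0 := ne_zero_of_re_pos (by simpa using by linarith)
    simp [defect, Complex.zero_cpow, hs, ne_zero_of_re_pos hs₀]
  | succ m ih => rw [defect_succ_natCast_succ, defect_eq_defect_natCast hs₀ hs₁ (by simp), ih]

lemma defect_eq (hs₀ : 0 < s.re) (hs₁ : s.re < 1) (hx : x ∈ Set.Icc (m : ℝ) (m + 1)) :
    defect s m x = s / Complex.Gamma (1 - s) * modeSum s 0 :=
  (defect_eq_defect_natCast hs₀ hs₁ hx).trans (defect_natCast hs₀ hs₁ m)

end Defect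

section Constant

lemma integrable_cpow_mul_exp_neg_add_mul {p : ℂ} (hp₀ : 0 < p.re) (hp₁ : p.re < 1) {c : ℝ}
    (hc : 0 < c) :
    Integrable (Function.uncurry fun u t : ℝ =>
        (u : ℂ) ^ (p - 1) * Complex.exp (-((c + u : ℝ) * t)))
      ((volume.restrict (Set.Ioi 0)).prod (volume.restrict (Set.Ioi 0))) := by
  have hsplit (u t : ℝ) : (u : ℂ) ^ (p - 1) * Complex.exp (-((c + u : ℝ) * t)) =
      Complex.exp (-(c * t)) * ((u : ℂ) ^ (p - 1) * Complex.exp (-(t * u))) := by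
    rw [mul_left_comm, ← Complex.exp_add]
    push_cast
    ring_nf
  refine (integrable_prod_iff' (by fun_prop)).mpr ⟨?_, ?_⟩ <;>
    simp only [Function.uncurry_apply_pair, hsplit]
  · filter_upwards [ae_restrict_mem measurableSet_Ioi] with t ht
    exact (integrableOn_cpow_mul_exp_neg_mul hp₀ ht).const_mul _
  · refine IntegrableOn.congr_fun ((integrableOn_rpow_mul_exp_neg_mul (p := -p.re)
      (by linarith) hc).mul_const (Real.Gamma p.re)) (fun t ht => ?_) measurableSet_Ioi
    have hinner := Real.integral_rpow_mul_exp_neg_mul_Ioi hp₀ (Set.mem_Ioi.mp ht)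
    rw [one_div, Real.inv_rpow (le_of_lt ht), ← Real.rpow_neg (le_of_lt ht)] at hinner
    simp only [norm_mul]
    rw [integral_const_mul, mul_right_comm, ← hinner, mul_comm]
    congr 1
    · simp [Complex.norm_exp]
    · refine setIntegral_congr_fun measurableSet_Ioi fun u hu => ?_
      simp [Complex.norm_cpow_eq_rpow_re_of_pos (Set.mem_Ioi.mp hu), Complex.norm_exp]

-- Write `1 / (c + u)` as a Laplace integral and exchange the two integrations.
lemma mellin_one_div_add {p : ℂ} (hp₀ : 0 < p.re) (hp₁ : p.re < 1) {c : ℝ} (hc : 0 < c) :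
    mellin (fun u => 1 / ((c + u : ℝ) : ℂ)) p =
      (c : ℂ) ^ (p - 1) * (Complex.Gamma p * Complex.Gamma (1 - p)) := by
  have hp : 0 < (1 - p).re := by simpa using hp₁
  calc mellin (fun u => 1 / ((c + u : ℝ) : ℂ)) p
      = ∫ u in Set.Ioi (0 : ℝ), ∫ t in Set.Ioi (0 : ℝ),
          (u : ℂ) ^ (p - 1) * Complex.exp (-((c + u : ℝ) * t)) := by
        refine setIntegral_congr_fun measurableSet_Ioi fun u hu => ?_
        have hlaplace := Complex.integral_cpow_mul_exp_neg_mul_Ioi (a := 1) (by simp)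
          (add_pos hc (Set.mem_Ioi.mp hu))
        simp only [sub_self, Complex.cpow_zero, one_mul, Complex.cpow_one, Complex.Gamma_one,
          mul_one] at hlaplace
        rw [integral_const_mul, hlaplace, smul_eq_mul]
    _ = ∫ t in Set.Ioi (0 : ℝ), ∫ u in Set.Ioi (0 : ℝ),
          (u : ℂ) ^ (p - 1) * Complex.exp (-((c + u : ℝ) * t)) :=
        integral_integral_swap (integrable_cpow_mul_exp_neg_add_mul hp₀ hp₁ hc)
    _ = ∫ t in Set.Ioi (0 : ℝ),
          (t : ℂ) ^ ((1 - p) - 1) * Complex.exp (-(c * t)) * Complex.Gamma p := by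
        refine setIntegral_congr_fun measurableSet_Ioi fun t ht => ?_
        have hGamma := Complex.integral_cpow_mul_exp_neg_mul_Ioi hp₀ (Set.mem_Ioi.mp ht)
        rw [ofReal_one_div_cpow (le_of_lt ht)] at hGamma
        rw [sub_sub_cancel_left, mul_right_comm, ← hGamma, ← integral_mul_const]
        refine integral_congr_ae (.of_forall fun u => ?_)
        simp only
        rw [mul_assoc, ← Complex.exp_add]
        push_cast
        ring_nf
    _ = (c : ℂ) ^ (p - 1) * (Complex.Gamma p * Complex.Gamma (1 - p)) := by
        rw [integral_mul_const, Complex.integral_cpow_mul_exp_neg_mul_Ioi hp hc,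
          ofReal_one_div_cpow hc.le, neg_sub]
        ring

variable {s : ℂ}

lemma integral_cpow_neg_div_sq_add_sq (hs₀ : -1 < s.re) (hs₁ : s.re < 1) {c : ℝ} (hc : 0 < c) :
    ∫ w in Set.Ioi (0 : ℝ), (w : ℂ) ^ (-s) / ((c : ℂ) ^ 2 + (w : ℂ) ^ 2) =
      (c : ℂ) ^ (-(s + 1)) * (Real.pi / (2 * Complex.cos (Real.pi * s / 2))) := by
  have hp : ((1 - s) / 2).re = (1 - s.re) / 2 := by simp
  have hmellin := mellin_one_div_add (p := (1 - s) / 2) (by rw [hp]; linarith)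
    (by rw [hp]; linarith) (sq_pos_of_pos hc)
  have hsin : Complex.sin (Real.pi * ((1 - s) / 2)) = Complex.cos (Real.pi * s / 2) := by
    rw [← Complex.sin_pi_div_two_sub]
    ring_nf
  have hpow : ((c ^ 2 : ℝ) : ℂ) ^ ((1 - s) / 2 - 1) = (c : ℂ) ^ (-(s + 1)) := by
    have harg : (c : ℂ).arg = 0 := Complex.arg_ofReal_of_nonneg hc.le
    rw [Complex.ofReal_pow, ← Complex.cpow_ofNat_mul' (by simp [harg, Real.pi_pos])
      (by simp [harg, Real.pi_pos.le])]
    ring_nf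
  calc ∫ w in Set.Ioi (0 : ℝ), (w : ℂ) ^ (-s) / ((c : ℂ) ^ 2 + (w : ℂ) ^ 2)
      = mellin (fun w => 1 / ((c ^ 2 + w ^ (2 : ℝ) : ℝ) : ℂ)) (1 - s) := by
        refine setIntegral_congr_fun measurableSet_Ioi fun w _ => ?_
        simp only [Real.rpow_two, sub_sub_cancel_left, smul_eq_mul, mul_one_div]
        push_cast
        rfl
    _ = 2⁻¹ * mellin (fun u => 1 / ((c ^ 2 + u : ℝ) : ℂ)) ((1 - s) / 2) := by
        rw [mellin_comp_rpow (fun u => 1 / ((c ^ 2 + u : ℝ) : ℂ)) (1 - s) 2]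
        simp
    _ = (c : ℂ) ^ (-(s + 1)) * (Real.pi / (2 * Complex.cos (Real.pi * s / 2))) := by
        rw [hmellin, Complex.Gamma_mul_Gamma_one_sub, hsin, hpow]
        ring

lemma freq_sq (n : ℤ) : freq n ^ 2 = -(2 * Real.pi * n) ^ 2 := by
  rw [freq]
  linear_combination (2 * Real.pi * n : ℂ) ^ 2 * Complex.I_sq

lemma modeKernel_zero_add_modeKernel_neg_zero {n : ℤ} (hn : n ≠ 0) (w : ℝ) :
    modeKernel s n 0 w + modeKernel s (-n) 0 w =
      -2 * ((w : ℂ) ^ (-s) / (((2 * Real.pi * n : ℝ) : ℂ) ^ 2 + (w : ℂ) ^ 2)) := by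
  have hsub := freq_sub_ofReal_ne_zero hn w
  have hadd : freq n + w ≠ 0 := by simpa using freq_sub_ofReal_ne_zero hn (-w)
  have hneg : freq (-n) * (freq (-n) - w) = freq n * (freq n + w) := by
    rw [freq_neg]
    ring
  have hfreq := freq_ne_zero hn
  have hden : ((2 * Real.pi * n : ℝ) : ℂ) ^ 2 + (w : ℂ) ^ 2 = -((freq n - w) * (freq n + w)) := by
    push_cast
    linear_combination freq_sq n
  rw [modeKernel, modeKernel, hneg, hden]
  simp only [Complex.ofReal_zero, mul_zero, Complex.exp_zero, mul_one]
  field_simp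
  ring

lemma modeIntegral_zero_add_modeIntegral_neg_zero (hs₀ : 0 < s.re) (hs₁ : s.re < 1) (n : ℕ) :
    modeIntegral s n 0 + modeIntegral s (-n) 0 =
      -(2 * Real.pi : ℂ) ^ (-(s + 1)) * (Real.pi / Complex.cos (Real.pi * s / 2)) *
        (1 / (n : ℂ) ^ (s + 1)) := by
  rcases eq_or_ne n 0 with rfl | hn
  · have hs : s + 1 ≠ 0 := by simpa using add_one_ne_natCast hs₀ hs₁ 0
    simp [modeIntegral, modeKernel_zero, hs]
  have hn' : (n : ℤ) ≠ 0 := Nat.cast_ne_zero.mpr hn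
  have hc : 0 < 2 * Real.pi * ((n : ℤ) : ℝ) := by positivity
  have hpow : ((2 * Real.pi * ((n : ℤ) : ℝ) : ℝ) : ℂ) ^ (-(s + 1)) =
      (2 * Real.pi : ℂ) ^ (-(s + 1)) * (1 / (n : ℂ) ^ (s + 1)) := by
    rw [Complex.ofReal_mul, Complex.mul_cpow_ofReal_nonneg (by positivity) (by positivity),
      Complex.cpow_neg ((n : ℤ) : ℝ), one_div]
    push_cast
    rfl
  rw [modeIntegral, modeIntegral, ← integral_add (integrableOn_modeKernel hs₀ hs₁ n le_rfl)
    (integrableOn_modeKernel hs₀ hs₁ (-n) le_rfl)]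
  simp only [modeKernel_zero_add_modeKernel_neg_zero hn']
  rw [integral_const_mul, integral_cpow_neg_div_sq_add_sq (by linarith) hs₁ hc, hpow]
  ring

lemma modeSum_zero (hs₀ : 0 < s.re) (hs₁ : s.re < 1) :
    modeSum s 0 = -(2 * Real.pi : ℂ) ^ (-(s + 1)) *
      (Real.pi / Complex.cos (Real.pi * s / 2)) * riemannZeta (s + 1) := by
  have hpairs := (summable_modeIntegral hs₀ hs₁ le_rfl).hasSum.nat_add_neg
  simp only [modeIntegral_zero_add_modeIntegral_neg_zero hs₀ hs₁] at hpairs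
  rw [zeta_eq_tsum_one_div_nat_cpow (by simpa using hs₀), ← tsum_mul_left, hpairs.tsum_eq, modeSum]
  simp [modeIntegral, modeKernel_zero]

lemma pi_div_cos_pi_mul_div_two (hs₀ : 0 < s.re) (hs₁ : s.re < 1) :
    Real.pi / Complex.cos (Real.pi * s / 2) =
      2 * Complex.sin (Real.pi * s / 2) * (Complex.Gamma s * Complex.Gamma (1 - s)) := by
  have hsin : Complex.sin (Real.pi * s) =
      2 * Complex.sin (Real.pi * s / 2) * Complex.cos (Real.pi * s / 2) := by
    rw [← Complex.sin_two_mul, mul_div_cancel₀ _ two_ne_zero]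
  have hGamma : Complex.Gamma s * Complex.Gamma (1 - s) ≠ 0 :=
    mul_ne_zero (Complex.Gamma_ne_zero_of_re_pos hs₀)
      (Complex.Gamma_ne_zero_of_re_pos (by simpa using hs₁))
  rw [Complex.Gamma_mul_Gamma_one_sub, hsin] at hGamma ⊢
  have hsin_ne := left_ne_zero_of_mul (div_ne_zero_iff.mp hGamma).2
  rw [mul_div_assoc', mul_div_mul_left _ _ hsin_ne]

lemma div_Gamma_one_sub_mul_modeSum_zero (hs₀ : 0 < s.re) (hs₁ : s.re < 1) :
    s / Complex.Gamma (1 - s) * modeSum s 0 = riemannZeta (-s) := by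
  have hs := ne_zero_of_re_pos hs₀
  have hGamma : Complex.Gamma (1 - s) ≠ 0 :=
    Complex.Gamma_ne_zero_of_re_pos (by simpa using hs₁)
  have hcos : Complex.cos (Real.pi * (s + 1) / 2) = -Complex.sin (Real.pi * s / 2) := by
    rw [mul_add_one, add_div, Complex.cos_add_pi_div_two]
  have hpole (n : ℕ) : s + 1 ≠ -n := by
    intro h
    have hre : s.re + 1 = -n := by simpa using congrArg Complex.re h
    linarith [Nat.cast_nonneg (α := ℝ) n]
  have hzeta := riemannZeta_one_sub hpole (by simpa using hs)
  rw [sub_add_cancel_right, Complex.Gamma_add_one s hs, hcos] at hzeta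
  rw [hzeta, modeSum_zero hs₀ hs₁, pi_div_cos_pi_mul_div_two hs₀ hs₁]
  field_simp

end Constant

section SpecialValues

lemma Gamma_one_sub_eq_mul_Gamma_neg_add_one {s : ℂ} (hs₀ : s ≠ 0) (hs₁ : s + 1 ≠ 0) :
    Complex.Gamma (1 - s) = s * (s + 1) * Complex.Gamma (-(s + 1)) := by
  have hs : -(s + 1) + 1 ≠ 0 := by simpa using hs₀
  rw [show 1 - s = -(s + 1) + 1 + 1 by ring, Complex.Gamma_add_one _ hs,
    Complex.Gamma_add_one _ (neg_ne_zero.mpr hs₁)]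
  ring

lemma Gamma_three_halves : Complex.Gamma (3 / 2) = √Real.pi / 2 := by
  rw [show (3 / 2 : ℂ) = 1 / 2 + 1 by norm_num, Complex.Gamma_add_one _ (by norm_num),
    Complex.Gamma_one_half_eq, Real.sqrt_eq_rpow, Complex.ofReal_cpow Real.pi_pos.le]
  push_cast
  ring

lemma cos_pi_mul_three_halves_div_two :
    Complex.cos (Real.pi * (3 / 2) / 2) = -(√2 / 2 : ℝ) := by
  rw [show (Real.pi * (3 / 2) / 2 : ℂ) = Real.pi - (Real.pi / 4 : ℝ) by push_cast; ring,
    Complex.cos_pi_sub, ← Complex.ofReal_cos, Real.cos_pi_div_four]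

lemma two_pi_cpow_neg_three_halves :
    (2 * Real.pi : ℂ) ^ (-(3 / 2) : ℂ) = ((2 * Real.pi * (√2 * √Real.pi))⁻¹ : ℝ) := by
  have hpos : 0 < 2 * Real.pi := by positivity
  have hcast : ((2 * Real.pi : ℝ) : ℂ) ^ ((-(3 / 2) : ℝ) : ℂ) =
      ((2 * Real.pi) ^ (-(3 / 2) : ℝ) : ℝ) := (Complex.ofReal_cpow hpos.le _).symm
  rw [← Real.sqrt_mul zero_le_two, Real.sqrt_eq_rpow, ← Real.rpow_one_add' hpos.le (by norm_num),
    ← Real.rpow_neg hpos.le]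
  norm_num at hcast ⊢
  exact hcast

lemma riemannZeta_neg_one_half :
    riemannZeta (-(1 / 2)) = -(1 / (4 * Real.pi) * riemannZeta (3 / 2)) := by
  have hpole (n : ℕ) : (3 / 2 : ℂ) ≠ -n := fun h => by
    have := congrArg Complex.re h
    norm_num at this
    linarith [n.cast_nonneg (α := ℝ)]
  have hsqrt_two_ne : ((√2 : ℝ) : ℂ) ≠ 0 := by simp
  have hsqrt_pi_ne : ((√Real.pi : ℝ) : ℂ) ≠ 0 := by simp [Real.sqrt_eq_zero', Real.pi_pos]
  rw [show (-(1 / 2) : ℂ) = 1 - 3 / 2 by norm_num, riemannZeta_one_sub hpole (by norm_num),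
    two_pi_cpow_neg_three_halves, Gamma_three_halves, cos_pi_mul_three_halves_div_two]
  push_cast
  field_simp
  ring

lemma ofReal_sqrt_natCast (k : ℕ) : ((√(k : ℝ) : ℝ) : ℂ) = (k : ℂ) ^ (1 / 2 : ℂ) := by
  rw [Real.sqrt_eq_rpow, Complex.ofReal_cpow k.cast_nonneg]
  norm_num

end SpecialValues

end ExtendedFaulhaber

open ExtendedFaulhaber Finset in
theorem extended_faulhaber_sqrt_general {s : ℂ} (hs₀ : 0 < s.re) (hs₁ : s.re < 1) {x : ℝ}
    (hx : 0 < x) :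
    Summable (fun k => ‖faulhaberTerm (s + 1) x k‖) ∧
    ∑ k ∈ Icc 1 ⌊x⌋₊, (k : ℂ) ^ s =
      (x : ℂ) ^ (s + 1) / (s + 1) + riemannZeta (-s) +
        (x : ℂ) ^ (s + 1) / (s + 1) * ∑' k, faulhaberTerm (s + 1) x k := by
  have hsum := hasSum_faulhaberTerm hs₀ hs₁ hx
  refine ⟨hsum.summable.norm, ?_⟩
  have hs := ne_zero_of_re_pos hs₀
  have hs' : s + 1 ≠ 0 := by simpa using add_one_ne_natCast hs₀ hs₁ 0
  have hx' : (x : ℂ) ≠ 0 := Complex.ofReal_ne_zero.mpr hx.ne'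
  have hpow : (x : ℂ) ^ s ≠ 0 := by simp [Complex.cpow_eq_zero_iff, hx']
  have hdefect := (defect_eq hs₀ hs₁
    ⟨Nat.floor_le hx.le, (Nat.lt_floor_add_one x).le⟩).trans
      (div_Gamma_one_sub_mul_modeSum_zero hs₀ hs₁)
  have hGamma := Gamma_one_sub_eq_mul_Gamma_neg_add_one hs hs'
  have hfract : (bernPoly 1 (Int.fract x) : ℂ) = x - ⌊x⌋₊ - 1 / 2 := by
    rw [bernPoly_eq_bernoulliFun, bernoulliFun_one]
    rw [Int.fract, ← natCast_floor_eq_intCast_floor hx.le]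
    push_cast
    rfl
  rw [hsum.tsum_eq, ← hdefect, defect, hGamma, hfract, Complex.cpow_add _ _ hx', Complex.cpow_one]
  field_simp
  ring

open Finset Real in
/-- Extended generalized Faulhaber summation formula for the sum of square roots
(summation formula 3, formula (49) of the paper). -/
theorem extended_faulhaber_sqrt (x : ℝ) (hx : 0 < x) :
    Summable (fun k : ℕ =>
      ‖(-1 : ℂ) ^ (k + 1) *
          (∑ l ∈ Icc 1 (k + 1),
            cchoose ((3 : ℂ) / 2) l * (S1 (k + 1) l : ℂ) * (bernPoly l (Int.fract x) : ℂ)) /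
        risingProd (x : ℂ) (k + 1)‖) ∧
    ((∑ k ∈ Icc 1 ⌊x⌋₊, Real.sqrt k : ℝ) : ℂ) =
      2 / 3 * (x : ℂ) ^ ((3 : ℂ) / 2) - 1 / (4 * (π : ℂ)) * riemannZeta (3 / 2) +
        2 / 3 * (x : ℂ) ^ ((3 : ℂ) / 2) *
          ∑' k : ℕ,
            (-1 : ℂ) ^ (k + 1) *
                (∑ l ∈ Icc 1 (k + 1),
                  cchoose ((3 : ℂ) / 2) l * (S1 (k + 1) l : ℂ) *
                    (bernPoly l (Int.fract x) : ℂ)) /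
              risingProd (x : ℂ) (k + 1) := by
  have hs : (1 / 2 : ℂ) + 1 = 3 / 2 := by norm_num
  obtain ⟨hsummable, hsum⟩ :=
    extended_faulhaber_sqrt_general (s := 1 / 2) (by norm_num) (by norm_num) hx
  rw [hs] at hsummable hsum
  refine ⟨hsummable, ?_⟩
  rw [Complex.ofReal_sum, sum_congr rfl fun k _ => ExtendedFaulhaber.ofReal_sqrt_natCast k, hsum,
    ExtendedFaulhaber.riemannZeta_neg_one_half]
  simp only [ExtendedFaulhaber.faulhaberTerm]
  ring
end

section
/- Generalized Faulhaber formula for the sum of inverse square roots: For every natural number n ≥ 1, the series ∑_{k=1}^{∞} (−1)^k (∑_{l=1}^{k} ((2l−1)!!/(2^l (l+1)!)) B_{l+1} S_k^{(1)}(l)) / ((n+1)(n+2)⋯(n+k)) converges absolutely, and ∑_{k=1}^{n} 1/√k = 2√n + ζ(1/2) + 1/(2√n) + (1/√n) ∑_{k=1}^{∞} (−1)^k (∑_{l=1}^{k} ((2l−1)!!/(2^l (l+1)!)) B_{l+1} S_k^{(1)}(l)) / ((n+1)(n+2)⋯(n+k)). -/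
/-!
Fix `0 < a < 1`. Euler–Maclaurin in Binet form expresses the remainder in
`∑_{k ≤ n} k⁻ᵃ = n¹⁻ᵃ / (1 - a) + ζ(a) + …` through the Laplace transform of
`t ^ (a - 1) (1 / (1 - e⁻ᵗ) - 1 / t)`. For `0 < x ≤ 1` the kernel at `x t` has an expansion in
powers of `w = 1 - e⁻ᵗ`, whose coefficients are sums of Bernoulli and Stirling numbers times powers
of `x`. Kaluza's criterion for quotients of power series shows that they are nonnegative: the
kernel at `x t` is the quotient of the series in `w` of `1 - ∫₀¹ (1 - w) ^ (x u) du` and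
`1 - (1 - w) ^ x`. Everything being nonnegative, the expansion may be integrated term by term,
against a Beta weight in `x`, which turns powers of `x` into Pochhammer symbols, and against
`e^{-v t}` in `t`, which turns powers of `w` into inverse rising factorials.
-/

section ZetaLimit

open Filter Topology Set

lemma norm_cpow_neg_sub_cpow_neg_le {s : ℂ} {m x : ℝ} (hs : 0 ≤ s.re) (hm : 0 < m) (hmx : m ≤ x) :
    ‖(x : ℂ) ^ (-s) - (m : ℂ) ^ (-s)‖ ≤ ‖s‖ * m ^ (-s.re - 1) * (x - m) := by
  have hderiv : ∀ y ∈ Icc m x, HasDerivWithinAt (fun y : ℝ ↦ (y : ℂ) ^ (-s))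
      (-s * (y : ℂ) ^ (-s - 1)) (Icc m x) y := fun y hy ↦ by
    have hy0 : (y : ℂ) ∈ Complex.slitPlane := Complex.ofReal_mem_slitPlane.2 (hm.trans_le hy.1)
    simpa using
      ((hasDerivAt_id (y : ℂ)).cpow_const (c := -s) hy0).comp_ofReal.hasDerivWithinAt
  have hbound : ∀ y ∈ Icc m x, ‖-s * (y : ℂ) ^ (-s - 1)‖ ≤ ‖s‖ * m ^ (-s.re - 1) := fun y hy ↦ by
    rw [norm_mul, norm_neg, Complex.norm_cpow_eq_rpow_re_of_pos (hm.trans_le hy.1)]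
    gcongr
    simpa using Real.rpow_le_rpow_of_nonpos hm hy.1 (by linarith : -s.re - 1 ≤ 0)
  simpa [abs_of_nonneg (sub_nonneg.2 hmx)] using
    (convex_Icc m x).norm_image_sub_le_of_norm_hasDerivWithin_le hderiv hbound
      (left_mem_Icc.2 hmx) (right_mem_Icc.2 hmx)

/-- `(s - 1) * ((n + 1) ^ (-s) - ∫ x in (n + 1)..(n + 2), x ^ (-s))` with the integral evaluated:
the error of the rectangle rule for `x ^ (-s)` on the `n`-th unit interval. The factor `s - 1`
makes it an entire function of `s`. -/
noncomputable def zetaDefect (n : ℕ) (s : ℂ) : ℂ :=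
  (s - 1) * ((n + 1 : ℕ) : ℂ) ^ (-s) + ((n + 2 : ℕ) : ℂ) ^ (1 - s) - ((n + 1 : ℕ) : ℂ) ^ (1 - s)

lemma norm_zetaDefect_le (n : ℕ) {s : ℂ} (hs : 0 ≤ s.re) :
    ‖zetaDefect n s‖ ≤ ‖s - 1‖ * (‖s‖ * ((n + 1 : ℕ) : ℝ) ^ (-s.re - 1)) := by
  set m : ℝ := ((n + 1 : ℕ) : ℝ) with hm_def
  have hm : 0 < m := by positivity
  have hderiv : ∀ y ∈ Icc m (m + 1), HasDerivWithinAt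
      (fun y : ℝ ↦ (y : ℂ) ^ (1 - s) - (1 - s) * (m : ℂ) ^ (-s) * y)
      ((1 - s) * ((y : ℂ) ^ (-s) - (m : ℂ) ^ (-s))) (Icc m (m + 1)) y := fun y hy ↦ by
    have hy0 : (y : ℂ) ∈ Complex.slitPlane := Complex.ofReal_mem_slitPlane.2 (hm.trans_le hy.1)
    have hid := hasDerivAt_id (y : ℂ)
    refine ((hid.cpow_const hy0).sub (hid.const_mul _)).comp_ofReal.hasDerivWithinAt.congr_deriv ?_
    simp only [id_eq, mul_one]
    ring_nf
  have hbound : ∀ y ∈ Icc m (m + 1), ‖(1 - s) * ((y : ℂ) ^ (-s) - (m : ℂ) ^ (-s))‖ ≤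
      ‖s - 1‖ * (‖s‖ * m ^ (-s.re - 1)) := fun y hy ↦ by
    rw [norm_mul, norm_sub_rev 1 s]
    gcongr
    refine (norm_cpow_neg_sub_cpow_neg_le hs hm hy.1).trans (mul_le_of_le_one_right ?_ ?_)
    · positivity
    · linarith [hy.2]
  have hmvt := (convex_Icc m (m + 1)).norm_image_sub_le_of_norm_hasDerivWithin_le hderiv hbound
    (left_mem_Icc.2 (by simp)) (right_mem_Icc.2 (by simp))
  rw [add_sub_cancel_left, norm_one, mul_one] at hmvt
  refine le_of_eq_of_le (congrArg norm ?_) hmvt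
  simp only [zetaDefect, hm_def]
  push_cast
  ring_nf

lemma summable_natCast_add_one_rpow_neg_sub_one {σ : ℝ} (hσ : 0 < σ) :
    Summable fun n : ℕ ↦ ((n + 1 : ℕ) : ℝ) ^ (-σ - 1) :=
  (summable_nat_add_iff 1).2 (Real.summable_nat_rpow.2 (by linarith))

lemma summable_zetaDefect {s : ℂ} (hs : 0 < s.re) : Summable fun n ↦ zetaDefect n s :=
  .of_norm_bounded (((summable_natCast_add_one_rpow_neg_sub_one hs).mul_left _).mul_left _)
    fun n ↦ norm_zetaDefect_le n hs.le

lemma differentiable_zetaDefect (n : ℕ) : Differentiable ℂ (zetaDefect n) := by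
  have h₁ : ((n + 1 : ℕ) : ℂ) ≠ 0 := Nat.cast_ne_zero.2 n.succ_ne_zero
  have h₂ : ((n + 2 : ℕ) : ℂ) ≠ 0 := Nat.cast_ne_zero.2 (n + 1).succ_ne_zero
  intro s
  unfold zetaDefect
  refine .sub (.add (.mul (by fun_prop) ?_) ?_) ?_ <;>
    exact .const_cpow (by fun_prop) (.inl ‹_›)

lemma sum_range_zetaDefect (N : ℕ) (s : ℂ) :
    ∑ n ∈ Finset.range N, zetaDefect n s =
      (s - 1) * ∑ n ∈ Finset.range N, ((n + 1 : ℕ) : ℂ) ^ (-s) +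
        ((N + 1 : ℕ) : ℂ) ^ (1 - s) - 1 := by
  induction N with
  | zero => simp
  | succ N ih =>
    rw [Finset.sum_range_succ, ih, Finset.sum_range_succ, zetaDefect]
    ring

lemma differentiableOn_tsum_zetaDefect :
    DifferentiableOn ℂ (fun s ↦ ∑' n, zetaDefect n s) {s | 0 < s.re} := by
  intro s (hs : 0 < s.re)
  set U : Set ℂ := {z | s.re / 2 < z.re} ∩ Metric.ball s 1
  have hU : IsOpen U := (isOpen_lt continuous_const Complex.continuous_re).inter Metric.isOpen_ball
  have hsU : s ∈ U := ⟨by simpa using hs, by simp⟩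
  have hbound : ∀ n, ∀ z ∈ U, ‖zetaDefect n z‖ ≤
      (‖s‖ + 2) * ((‖s‖ + 2) * ((n + 1 : ℕ) : ℝ) ^ (-(s.re / 2) - 1)) := fun n z hz ↦ by
    have hre : s.re / 2 < z.re := hz.1
    have hz : ‖z‖ ≤ ‖s‖ + 1 := by
      have : ‖z - s‖ < 1 := mem_ball_iff_norm.1 hz.2
      linarith [norm_sub_norm_le z s]
    have hz1 : ‖z - 1‖ ≤ ‖s‖ + 2 := by linarith [norm_sub_le z 1, norm_one (α := ℂ)]
    refine (norm_zetaDefect_le n (by linarith)).trans ?_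
    gcongr
    · linarith
    · simp
  have hdiff := Complex.differentiableOn_tsum_of_summable_norm
    (((summable_natCast_add_one_rpow_neg_sub_one (half_pos hs)).mul_left _).mul_left _)
    (fun n ↦ (differentiable_zetaDefect n).differentiableOn) hU hbound
  exact (hdiff.differentiableAt (hU.mem_nhds hsU)).differentiableWithinAt

lemma tendsto_natCast_add_one_cpow_nhds_zero {r : ℂ} (hr : r.re < 0) :
    Tendsto (fun N : ℕ ↦ ((N + 1 : ℕ) : ℂ) ^ r) atTop (𝓝 0) := by
  rw [tendsto_zero_iff_norm_tendsto_zero]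
  simp_rw [Complex.norm_natCast_cpow_of_pos (Nat.succ_pos _)]
  simpa only [neg_neg, Function.comp_def] using (tendsto_rpow_neg_atTop (neg_pos.2 hr)).comp
    (tendsto_natCast_atTop_atTop.comp (tendsto_add_atTop_nat 1))

lemma tsum_zetaDefect_of_one_lt_re {s : ℂ} (hs : 1 < s.re) :
    ∑' n, zetaDefect n s = riemannZeta₁ s - 1 := by
  have hs1 : s ≠ 1 := by rintro rfl; simp at hs
  have hζ : HasSum (fun n : ℕ ↦ ((n + 1 : ℕ) : ℂ) ^ (-s)) (riemannZeta s) := by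
    rw [zeta_eq_tsum_one_div_nat_add_one_cpow hs]
    simpa [Complex.cpow_neg] using
      ((summable_nat_add_iff 1).2 (Complex.summable_one_div_nat_cpow.2 hs)).hasSum
  have hpow := tendsto_natCast_add_one_cpow_nhds_zero (r := 1 - s) (by simpa using hs)
  have hsum := (summable_zetaDefect (by linarith)).hasSum.tendsto_sum_nat
  simp_rw [sum_range_zetaDefect] at hsum
  rw [tendsto_nhds_unique hsum
    (((hζ.tendsto_sum_nat.const_mul (s - 1)).add hpow).sub_const 1), add_zero,
    riemannZeta_eq_inv_sub_mul hs1, mul_inv_cancel_left₀ (sub_ne_zero.2 hs1)]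

lemma tsum_zetaDefect {s : ℂ} (hs : 0 < s.re) : ∑' n, zetaDefect n s = riemannZeta₁ s - 1 := by
  have hopen : IsOpen {s : ℂ | 0 < s.re} := isOpen_lt continuous_const Complex.continuous_re
  refine (differentiableOn_tsum_zetaDefect.analyticOnNhd hopen).eqOn_of_preconnected_of_eventuallyEq
    ((differentiable_riemannZeta₁.sub_const 1).differentiableOn.analyticOnNhd hopen)
    (convex_halfSpace_re_gt 0).isPreconnected (z₀ := 2) (by simp) ?_ hs
  have hmem : {s : ℂ | 1 < s.re} ∈ 𝓝 (2 : ℂ) :=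
    (isOpen_lt continuous_const Complex.continuous_re).mem_nhds (by simp)
  filter_upwards [hmem] with z hz using tsum_zetaDefect_of_one_lt_re hz

theorem tendsto_sum_cpow_neg_sub_riemannZeta {s : ℂ} (hs : 0 < s.re) (hs1 : s ≠ 1) :
    Tendsto (fun N : ℕ ↦ ∑ n ∈ Finset.range N, ((n + 1 : ℕ) : ℂ) ^ (-s) -
      ((N + 1 : ℕ) : ℂ) ^ (1 - s) / (1 - s)) atTop (𝓝 (riemannZeta s)) := by
  have hs' : s - 1 ≠ 0 := sub_ne_zero.2 hs1
  have hs'' : 1 - s ≠ 0 := sub_ne_zero.2 hs1.symm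
  have hsum := (summable_zetaDefect hs).hasSum.tendsto_sum_nat
  rw [tsum_zetaDefect hs] at hsum
  convert (hsum.add_const 1).const_mul (s - 1)⁻¹ using 2 with N
  · rw [sum_range_zetaDefect]
    field_simp
    ring
  · rw [sub_add_cancel, riemannZeta_eq_inv_sub_mul hs1]

end ZetaLimit

section BinetLaplace

open Filter Topology MeasureTheory Set

/-- The kernel `1 / (1 - e⁻ᵗ) - 1 / t` of Binet-type integral representations. Its Laplace
transforms measure the defect between sums and integrals of powers, see
`riemannZeta_eq_sum_sub_add_binetLaplace`. -/
noncomputable def binetKernel (t : ℝ) : ℝ := (1 - Real.exp (-t))⁻¹ - t⁻¹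

lemma one_sub_exp_neg_pos {t : ℝ} (ht : 0 < t) : 0 < 1 - Real.exp (-t) :=
  sub_pos.2 (Real.exp_lt_one_iff.2 (neg_lt_zero.2 ht))

lemma binetKernel_nonneg {t : ℝ} (ht : 0 < t) : 0 ≤ binetKernel t :=
  sub_nonneg.2 <| inv_anti₀ (one_sub_exp_neg_pos ht) (by linarith [Real.one_sub_le_exp_neg t])

lemma binetKernel_le_one {t : ℝ} (ht : 0 < t) : binetKernel t ≤ 1 := by
  have hexp : Real.exp (-t) * (1 + t) ≤ 1 := by
    rw [Real.exp_neg, inv_mul_le_one₀ (Real.exp_pos t)]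
    linarith [Real.add_one_le_exp t]
  have hpos := one_sub_exp_neg_pos ht
  have hdiff : 1 - binetKernel t =
      (1 - Real.exp (-t) * (1 + t)) / ((1 - Real.exp (-t)) * t) := by
    unfold binetKernel
    field_simp
    ring
  have : 0 ≤ 1 - binetKernel t := hdiff ▸ div_nonneg (sub_nonneg.2 hexp) (by positivity)
  linarith

lemma one_sub_exp_neg_mul_binetKernel {t : ℝ} (ht : 0 < t) :
    (1 - Real.exp (-t)) * binetKernel t = 1 - (1 - Real.exp (-t)) / t := by
  rw [binetKernel, mul_sub, mul_inv_cancel₀ (one_sub_exp_neg_pos ht).ne', div_eq_mul_inv]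

lemma measurable_binetKernel : Measurable binetKernel := by
  unfold binetKernel
  fun_prop

variable {a v : ℝ}

lemma integrableOn_rpow_sub_one_mul_exp_neg_mul (ha : 0 < a) (hv : 0 < v) :
    IntegrableOn (fun t : ℝ ↦ t ^ (a - 1) * Real.exp (-(v * t))) (Ioi 0) := by
  simpa using integrableOn_rpow_mul_exp_neg_mul_rpow (s := a - 1) (by linarith) one_pos hv

/-- The Laplace transform of `t ^ (a - 1) * binetKernel t`. -/
noncomputable def binetLaplace (a v : ℝ) : ℝ :=
  ∫ t in Ioi (0 : ℝ), t ^ (a - 1) * Real.exp (-(v * t)) * binetKernel t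

lemma integrableOn_binetLaplace (ha : 0 < a) (hv : 0 < v) :
    IntegrableOn (fun t : ℝ ↦ t ^ (a - 1) * Real.exp (-(v * t)) * binetKernel t) (Ioi 0) := by
  refine (integrableOn_rpow_sub_one_mul_exp_neg_mul ha hv).mul_bdd (c := 1)
    measurable_binetKernel.aestronglyMeasurable ?_
  filter_upwards [ae_restrict_mem measurableSet_Ioi] with t (ht : 0 < t)
  rw [Real.norm_of_nonneg (binetKernel_nonneg ht)]
  exact binetKernel_le_one ht

lemma binetLaplace_nonneg (a v : ℝ) : 0 ≤ binetLaplace a v :=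
  setIntegral_nonneg measurableSet_Ioi fun t (ht : 0 < t) ↦
    mul_nonneg (by positivity) (binetKernel_nonneg ht)

lemma binetLaplace_le (ha : 0 < a) (hv : 0 < v) :
    binetLaplace a v ≤ v ^ (-a) * Real.Gamma a := by
  rw [Real.rpow_neg_eq_inv_rpow, ← one_div, ← Real.integral_rpow_mul_exp_neg_mul_Ioi ha hv]
  exact setIntegral_mono_on (integrableOn_binetLaplace ha hv)
    (integrableOn_rpow_sub_one_mul_exp_neg_mul ha hv) measurableSet_Ioi fun t (ht : 0 < t) ↦
      mul_le_of_le_one_right (by positivity) (binetKernel_le_one ht)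

lemma tendsto_binetLaplace_atTop (ha : 0 < a) : Tendsto (binetLaplace a) atTop (𝓝 0) := by
  refine squeeze_zero' (.of_forall (binetLaplace_nonneg a))
    ((eventually_gt_atTop 0).mono fun v hv ↦ binetLaplace_le ha hv) ?_
  simpa using (tendsto_rpow_neg_atTop ha).mul_const (Real.Gamma a)

lemma integral_exp_neg_mul_interval {t : ℝ} (ht : t ≠ 0) (v : ℝ) :
    ∫ x in v..v + 1, Real.exp (-(x * t)) = Real.exp (-(v * t)) * ((1 - Real.exp (-t)) / t) := by
  have hderiv : ∀ x ∈ uIcc v (v + 1),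
      HasDerivAt (fun x ↦ -Real.exp (-(x * t)) / t) (Real.exp (-(x * t))) x := fun x _ ↦ by
    refine ((((hasDerivAt_id x).mul_const t).neg.exp).neg.div_const t).congr_deriv ?_
    simp [ht]
  rw [intervalIntegral.integral_eq_sub_of_hasDerivAt hderiv
    (Continuous.intervalIntegrable (by fun_prop) _ _), add_one_mul, neg_add, Real.exp_add]
  ring

lemma integral_rpow_mul_exp_neg_mul_one_sub_exp_neg_div (ha : 0 < a) (hv : 0 < v) :
    ∫ t in Ioi (0 : ℝ), t ^ (a - 1) * Real.exp (-(v * t)) * ((1 - Real.exp (-t)) / t) =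
      Real.Gamma a * ∫ x in v..v + 1, x ^ (-a) := by
  have hle : v ≤ v + 1 := by linarith
  have hΓ : ∀ x ∈ Ioc v (v + 1),
      ∫ t in Ioi (0 : ℝ), t ^ (a - 1) * Real.exp (-(x * t)) = Real.Gamma a * x ^ (-a) :=
    fun x hx ↦ by
      rw [Real.integral_rpow_mul_exp_neg_mul_Ioi ha (hv.trans hx.1), one_div,
        ← Real.rpow_neg_eq_inv_rpow, mul_comm]
  have hint : Integrable (fun p : ℝ × ℝ ↦ p.1 ^ (a - 1) * Real.exp (-(p.2 * p.1)))
      ((volume.restrict (Ioi 0)).prod (volume.restrict (Ioc v (v + 1)))) := by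
    refine (integrable_prod_iff' (by fun_prop)).2 ⟨?_, ?_⟩
    · filter_upwards [ae_restrict_mem measurableSet_Ioc] with x hx
      exact integrableOn_rpow_sub_one_mul_exp_neg_mul ha (hv.trans hx.1)
    · have hpow : IntegrableOn (fun x : ℝ ↦ Real.Gamma a * x ^ (-a)) (Ioc v (v + 1)) := by
        rw [← intervalIntegrable_iff_integrableOn_Ioc_of_le hle]
        refine (intervalIntegral.intervalIntegrable_rpow (.inr ?_)).const_mul _
        rw [uIcc_of_le hle]
        exact fun h ↦ hv.not_ge h.1
      refine hpow.congr_fun (fun x hx ↦ ?_) measurableSet_Ioc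
      refine (hΓ x hx).symm.trans (setIntegral_congr_fun measurableSet_Ioi fun t (ht : 0 < t) ↦ ?_)
      exact (Real.norm_of_nonneg (by positivity)).symm
  calc ∫ t in Ioi (0 : ℝ), t ^ (a - 1) * Real.exp (-(v * t)) * ((1 - Real.exp (-t)) / t)
      = ∫ t in Ioi (0 : ℝ), ∫ x in Ioc v (v + 1), t ^ (a - 1) * Real.exp (-(x * t)) := by
        refine setIntegral_congr_fun measurableSet_Ioi fun t (ht : 0 < t) ↦ ?_
        rw [mul_assoc, ← integral_exp_neg_mul_interval ht.ne', integral_const_mul,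
          intervalIntegral.integral_of_le hle]
    _ = ∫ x in Ioc v (v + 1), ∫ t in Ioi (0 : ℝ), t ^ (a - 1) * Real.exp (-(x * t)) :=
        integral_integral_swap hint
    _ = Real.Gamma a * ∫ x in v..v + 1, x ^ (-a) := by
        rw [setIntegral_congr_fun measurableSet_Ioc hΓ, integral_const_mul,
          intervalIntegral.integral_of_le hle]

lemma binetLaplace_sub_binetLaplace_add_one (ha : 0 < a) (hv : 0 < v) :
    binetLaplace a v - binetLaplace a (v + 1) =
      Real.Gamma a * (v ^ (-a) - ∫ x in v..v + 1, x ^ (-a)) := by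
  have hv1 : 0 < v + 1 := by linarith
  have hint := integrableOn_rpow_sub_one_mul_exp_neg_mul ha hv
  have hkernel := integrableOn_binetLaplace ha hv
  have hkernel1 := integrableOn_binetLaplace ha hv1
  have hkernel_sub : IntegrableOn (fun t ↦ t ^ (a - 1) * Real.exp (-(v * t)) * binetKernel t -
      t ^ (a - 1) * Real.exp (-((v + 1) * t)) * binetKernel t) (Ioi 0) := hkernel.sub hkernel1
  have hpoint : ∀ t ∈ Ioi (0 : ℝ), t ^ (a - 1) * Real.exp (-(v * t)) * ((1 - Real.exp (-t)) / t) =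
      t ^ (a - 1) * Real.exp (-(v * t)) -
        (t ^ (a - 1) * Real.exp (-(v * t)) * binetKernel t -
          t ^ (a - 1) * Real.exp (-((v + 1) * t)) * binetKernel t) := fun t ht ↦ by
    rw [add_one_mul, neg_add, Real.exp_add]
    linear_combination
      (t ^ (a - 1) * Real.exp (-(v * t))) * one_sub_exp_neg_mul_binetKernel ht
  have hsplit := integral_rpow_mul_exp_neg_mul_one_sub_exp_neg_div ha hv
  rw [setIntegral_congr_fun measurableSet_Ioi hpoint, integral_sub hint hkernel_sub,
    integral_sub hkernel hkernel1,
    Real.integral_rpow_mul_exp_neg_mul_Ioi ha hv, one_div, ← Real.rpow_neg_eq_inv_rpow] at hsplit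
  unfold binetLaplace
  linear_combination -hsplit

lemma integral_rpow_neg_interval (ha1 : a ≠ 1) (hv : 0 < v) :
    ∫ x in v..v + 1, x ^ (-a) = ((v + 1) ^ (1 - a) - v ^ (1 - a)) / (1 - a) := by
  rw [integral_rpow (.inr ⟨fun h ↦ ha1 (by linarith), ?_⟩), neg_add_eq_sub]
  rw [uIcc_of_le (by linarith)]
  exact fun h ↦ hv.not_ge h.1

lemma sum_range_rpow_neg_sub_add_binetLaplace (ha : 0 < a) (ha1 : a ≠ 1) (n : ℕ) :
    ∑ k ∈ Finset.range n, ((k + 1 : ℕ) : ℝ) ^ (-a) - ((n + 1 : ℕ) : ℝ) ^ (1 - a) / (1 - a) +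
        binetLaplace a (n + 1 : ℕ) / Real.Gamma a =
      binetLaplace a 1 / Real.Gamma a - 1 / (1 - a) := by
  induction n with
  | zero => simp [neg_add_eq_sub]
  | succ n ih =>
    have hn : (0 : ℝ) < (n + 1 : ℕ) := by positivity
    have hΓ : Real.Gamma a ≠ 0 := (Real.Gamma_pos_of_pos ha).ne'
    have hdiff := binetLaplace_sub_binetLaplace_add_one ha hn
    rw [integral_rpow_neg_interval ha1 hn, ← Nat.cast_add_one,
      mul_comm (Real.Gamma a), ← div_eq_iff hΓ] at hdiff
    rw [← ih, Finset.sum_range_succ]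
    linear_combination -hdiff

theorem riemannZeta_eq_sum_sub_add_binetLaplace (ha : 0 < a) (ha1 : a ≠ 1) (n : ℕ) :
    riemannZeta a = ((∑ k ∈ Finset.range n, ((k + 1 : ℕ) : ℝ) ^ (-a) -
      ((n + 1 : ℕ) : ℝ) ^ (1 - a) / (1 - a) +
        binetLaplace a (n + 1 : ℕ) / Real.Gamma a : ℝ) : ℂ) := by
  have hzeta := tendsto_sum_cpow_neg_sub_riemannZeta (s := a) (by simpa using ha)
    (by exact_mod_cast ha1)
  have hbinet := ((tendsto_binetLaplace_atTop ha).comp (tendsto_natCast_atTop_atTop.comp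
    (tendsto_add_atTop_nat 1))).div_const (Real.Gamma a)
  rw [sum_range_rpow_neg_sub_add_binetLaplace ha ha1]
  refine tendsto_nhds_unique hzeta ?_
  have hlim := (Complex.continuous_ofReal.tendsto _).comp
    (hbinet.const_sub (binetLaplace a 1 / Real.Gamma a - 1 / (1 - a)))
  rw [zero_div, sub_zero] at hlim
  refine hlim.congr fun N ↦ ?_
  rw [Function.comp_apply, ← sum_range_rpow_neg_sub_add_binetLaplace ha ha1 N]
  simp only [Function.comp_apply, add_sub_cancel_right]
  push_cast [Complex.ofReal_cpow (Nat.cast_add_one_pos (α := ℝ) _).le]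
  rfl

end BinetLaplace

section StirlingNumbers

lemma stirling1Unsigned_eq_stirlingFirst (k l : ℕ) : stirling1Unsigned k l = k.stirlingFirst l := by
  induction k generalizing l with
  | zero => cases l <;> simp [stirling1Unsigned]
  | succ k ih =>
    cases l with
    | zero => rw [stirling1Unsigned, ih]; cases k <;> simp
    | succ l => rw [stirling1Unsigned, Nat.stirlingFirst_succ_succ, ih, ih, add_comm]

lemma coeff_ascPochhammer (R : Type*) [Semiring R] (k l : ℕ) :
    (ascPochhammer R k).coeff l = k.stirlingFirst l := by
  induction k generalizing l with
  | zero => cases l <;> simp [Polynomial.coeff_one]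
  | succ k ih =>
    rw [ascPochhammer_succ_right, mul_add, Polynomial.coeff_add, Polynomial.coeff_mul_natCast, ih]
    cases l with
    | zero => cases k <;> simp
    | succ l =>
      rw [Polynomial.coeff_mul_X, ih, Nat.stirlingFirst_succ_succ, ← Nat.cast_comm]
      push_cast
      rw [add_comm]

lemma ascPochhammer_eval_eq_sum_stirlingFirst {R : Type*} [Semiring R] [NoZeroDivisors R]
    [Nontrivial R] (k : ℕ) (z : R) :
    (ascPochhammer R k).eval z = ∑ l ∈ Finset.range (k + 1), (k.stirlingFirst l : R) * z ^ l := by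
  rw [Polynomial.eval_eq_sum_range, ascPochhammer_natDegree]
  simp_rw [coeff_ascPochhammer]

end StirlingNumbers

section NegLogSubstitution

open PowerSeries

variable (K : Type*) [Field K] [CharZero K]

/-- The power series of `-log (1 - w)`. -/
noncomputable def negLogSeries : K⟦X⟧ := mk fun k ↦ (k : K)⁻¹

lemma one_sub_X_mul_derivative_negLogSeries : (1 - X) * d⁄dX K (negLogSeries K) = 1 := by
  have hderiv : d⁄dX K (negLogSeries K) = mk 1 := by
    ext k
    rw [coeff_derivative, negLogSeries, coeff_mk, coeff_mk, Nat.cast_succ,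
      inv_mul_cancel₀ (Nat.cast_add_one_ne_zero k), Pi.one_apply]
  rw [hderiv, mul_comm, mk_one_mul_one_sub_eq_one]

lemma one_sub_X_mul_derivative_mk_stirlingFirst (l : ℕ) :
    (1 - X) * d⁄dX K (mk fun k ↦ ((l + 1).factorial * k.stirlingFirst (l + 1) / k.factorial : K)) =
      (l + 1 : K⟦X⟧) * mk fun k ↦ (l.factorial * k.stirlingFirst l / k.factorial : K) := by
  have hcast : (l + 1 : K⟦X⟧) = C (l + 1 : K) := by simp
  ext k
  rw [hcast, coeff_C_mul, sub_mul, one_mul, map_sub]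
  cases k with
  | zero => simp [coeff_derivative, Nat.factorial_succ, Nat.stirlingFirst_succ_succ, mul_assoc]
  | succ k =>
    have hk : (k.factorial : K) ≠ 0 := Nat.cast_ne_zero.2 k.factorial_ne_zero
    have hk1 : (k + 1 : K) ≠ 0 := Nat.cast_add_one_ne_zero k
    have hk2 : (k + 1 + 1 : K) ≠ 0 := by exact_mod_cast Nat.cast_add_one_ne_zero (R := K) (k + 1)
    simp only [coeff_succ_X_mul, coeff_derivative, coeff_mk, Nat.factorial_succ,
      Nat.stirlingFirst_succ_succ (k + 1) l]
    push_cast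
    field_simp
    ring

lemma negLogSeries_pow (l : ℕ) :
    negLogSeries K ^ l = mk fun k ↦ (l.factorial * k.stirlingFirst l / k.factorial : K) := by
  induction l with
  | zero =>
    ext (_ | k)
    · simp
    · simp [coeff_one]
  | succ l ih =>
    have hX : (1 - X : K⟦X⟧) ≠ 0 := fun h ↦ by simpa using congrArg constantCoeff h
    refine derivative.ext (mul_left_cancel₀ hX ?_) ?_
    · rw [one_sub_X_mul_derivative_mk_stirlingFirst, derivative_pow, ← ih, Nat.add_sub_cancel]
      push_cast
      linear_combination
        (l + 1 : K⟦X⟧) * negLogSeries K ^ l * one_sub_X_mul_derivative_negLogSeries K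
    · simp [negLogSeries]

lemma hasSubst_negLogSeries : HasSubst (negLogSeries K) :=
  .of_constantCoeff_zero' (by simp [negLogSeries])

variable {K}

/-- The substitution `f(w) ↦ f(-x log (1 - w))`. With `w = 1 - e⁻ᵗ` it turns expansions in powers
of `x t` into expansions in powers of `1 - e⁻ᵗ`. -/
noncomputable def substNegLog (x : K) : K⟦X⟧ →+* K⟦X⟧ :=
  (substAlgHom (R := K) (hasSubst_negLogSeries K)).toRingHom.comp (rescale x)

lemma substNegLog_X (x : K) : substNegLog x X = C x * negLogSeries K := by
  change substAlgHom (hasSubst_negLogSeries K) (rescale x X) = _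
  rw [rescale_X, map_mul, coe_substAlgHom, subst_X (hasSubst_negLogSeries K), subst_C]
  rfl

lemma coeff_substNegLog (x : K) (f : K⟦X⟧) (k : ℕ) :
    coeff k (substNegLog x f) = ∑ l ∈ Finset.range (k + 1),
      coeff l f * x ^ l * (l.factorial * k.stirlingFirst l / k.factorial : K) := by
  have hterm : ∀ l, coeff l (rescale x f) • coeff k (negLogSeries K ^ l) =
      coeff l f * x ^ l * (l.factorial * k.stirlingFirst l / k.factorial : K) := fun l ↦ by
    rw [negLogSeries_pow, coeff_mk, coeff_rescale, smul_eq_mul, mul_comm (x ^ l)]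
  change coeff k (substAlgHom (hasSubst_negLogSeries K) (rescale x f)) = _
  rw [coe_substAlgHom, coeff_subst' (hasSubst_negLogSeries K), finsum_congr hterm]
  refine finsum_eq_sum_of_support_subset _ fun l hl ↦ ?_
  rw [Finset.coe_range, Set.mem_Iio, Nat.lt_succ_iff]
  by_contra! hlt
  exact hl (by simp [Nat.stirlingFirst_eq_zero_of_lt hlt])

variable (K)

/-- The power series of `1 / (1 - e⁻ᵗ) - 1 / t`; compare `binetKernel`. -/
noncomputable def binetSeries : K⟦X⟧ := mk fun l ↦ (bernoulli' (l + 1) : K) / (l + 1).factorial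

/-- The power series of `(1 - e⁻ᵗ) / t`. -/
noncomputable def oneSubExpNegDivSeries : K⟦X⟧ := mk fun l ↦ (-1) ^ l / ((l + 1).factorial : K)

lemma X_mul_oneSubExpNegDivSeries :
    X * oneSubExpNegDivSeries K = 1 - evalNegHom (exp K) := by
  have hshift := sub_const_eq_X_mul_shift (1 - evalNegHom (exp K))
  have hcoeff : (mk fun l ↦ coeff (l + 1) (1 - evalNegHom (exp K))) = oneSubExpNegDivSeries K := by
    ext l
    simp [oneSubExpNegDivSeries, evalNegHom, coeff_rescale, coeff_exp, coeff_one, pow_succ,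
      div_eq_mul_inv]
  have hconst : constantCoeff (evalNegHom (exp K)) = 1 := by
    rw [← coeff_zero_eq_constantCoeff_apply, evalNegHom, coeff_rescale]
    simp
  rw [← hcoeff, ← hshift, map_sub, map_one, hconst, sub_self, map_zero, sub_zero]

lemma X_mul_binetSeries : X * binetSeries K = bernoulli'PowerSeries K - 1 := by
  have hshift := sub_const_eq_X_mul_shift (bernoulli'PowerSeries K)
  have hcoeff : (mk fun l ↦ coeff (l + 1) (bernoulli'PowerSeries K)) = binetSeries K := by
    ext l
    simp [binetSeries, bernoulli'PowerSeries]
  rw [← hcoeff, ← hshift]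
  simp [bernoulli'PowerSeries]

lemma binetSeries_mul_one_sub_exp_neg :
    binetSeries K * (1 - evalNegHom (exp K)) = 1 - oneSubExpNegDivSeries K := by
  have hbernoulli := bernoulli'PowerSeries_mul_exp_sub_one K
  have hexp := exp_mul_exp_neg_eq_one (A := K)
  refine mul_left_cancel₀ (X_ne_zero (R := K)) ?_
  linear_combination (1 - evalNegHom (exp K)) * X_mul_binetSeries K +
    evalNegHom (exp K) * hbernoulli + (X - bernoulli'PowerSeries K) * hexp +
      X_mul_oneSubExpNegDivSeries K

end NegLogSubstitution

section Kaluza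

open Finset.HasAntidiagonal (antidiagonal mem_antidiagonal)

variable {𝕜 : Type*} [Field 𝕜] [LinearOrder 𝕜] [IsStrictOrderedRing 𝕜] {a b c ρ : ℕ → 𝕜}

/- Kaluza's argument: subtracting `ρ n` times the relation for `a n` from the one for `a (n + 1)`
leaves only nonnegative corrections to `c (n + 1) * b 0`, since `ρ` is increasing. -/
lemma nonneg_of_sum_antidiagonal_eq (hb0 : 0 < b 0) (hb : ∀ j, 0 ≤ b j)
    (hbρ : ∀ j, b (j + 1) = b j * ρ j) (hρ : Monotone ρ) (ha0 : 0 ≤ a 0)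
    (ha : ∀ n, a n * ρ n ≤ a (n + 1))
    (hc : ∀ n, ∑ p ∈ antidiagonal n, c p.1 * b p.2 = a n) (n : ℕ) :
    0 ≤ c n := by
  induction n using Nat.strong_induction_on with
  | _ n ih =>
    cases n with
    | zero =>
      have h0 : c 0 * b 0 = a 0 := by simpa using hc 0
      exact nonneg_of_mul_nonneg_left (h0 ▸ ha0) hb0
    | succ n =>
      have hle : ∑ p ∈ antidiagonal n, c p.1 * b (p.2 + 1) ≤ a n * ρ n := by
        rw [← hc n, Finset.sum_mul]
        refine Finset.sum_le_sum fun p hp ↦ ?_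
        have hp : p.1 + p.2 = n := mem_antidiagonal.1 hp
        rw [hbρ, ← mul_assoc]
        exact mul_le_mul_of_nonneg_left (hρ (by lia)) (mul_nonneg (ih _ (by lia)) (hb _))
      have hsplit := hc (n + 1)
      rw [Finset.Nat.sum_antidiagonal_succ'] at hsplit
      exact nonneg_of_mul_nonneg_left (by linarith [ha n]) hb0

lemma mul_le_of_sum_antidiagonal_eq (hb : ∀ j, 0 ≤ b j) (hc : ∀ n, 0 ≤ c n)
    (hcb : ∀ n, ∑ p ∈ antidiagonal n, c p.1 * b p.2 = a n) (n : ℕ) :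
    c n * b 0 ≤ a n := by
  rw [← hcb n]
  have hmem : (n, 0) ∈ antidiagonal n :=
    mem_antidiagonal.2 (add_zero n)
  exact Finset.single_le_sum (f := fun p : ℕ × ℕ ↦ c p.1 * b p.2)
    (fun _ _ ↦ mul_nonneg (hc _) (hb _)) hmem

end Kaluza

section BinetCoeff

open Finset.HasAntidiagonal (antidiagonal)
open PowerSeries Set

/-- The coefficient of `w ^ k` in `(1 - w) ^ y`. -/
noncomputable def oneSubRpowCoeff (y : ℝ) (k : ℕ) : ℝ :=
  (ascPochhammer ℝ k).eval (-y) / k.factorial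

/-- The coefficient of `w ^ k` in `∫ u in 0..1, (1 - w) ^ (x * u)`. -/
noncomputable def meanOneSubRpowCoeff (x : ℝ) (k : ℕ) : ℝ :=
  ∫ u in (0 : ℝ)..1, oneSubRpowCoeff (x * u) k

/-- The coefficient of `w ^ k` in `binetKernel (-x log (1 - w))`, a polynomial in `x`. -/
noncomputable def binetCoeff (x : ℝ) (k : ℕ) : ℝ := coeff k (substNegLog x (binetSeries ℝ))

variable {x y : ℝ}

lemma oneSubRpowCoeff_zero (y : ℝ) : oneSubRpowCoeff y 0 = 1 := by simp [oneSubRpowCoeff]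

lemma oneSubRpowCoeff_one (y : ℝ) : oneSubRpowCoeff y 1 = -y := by simp [oneSubRpowCoeff]

lemma oneSubRpowCoeff_succ (y : ℝ) (k : ℕ) :
    oneSubRpowCoeff y (k + 1) = oneSubRpowCoeff y k * ((k - y) / (k + 1)) := by
  have hk : (k.factorial : ℝ) ≠ 0 := by positivity
  rw [oneSubRpowCoeff, oneSubRpowCoeff, ascPochhammer_succ_eval, Nat.factorial_succ]
  push_cast
  field_simp
  ring

lemma continuous_oneSubRpowCoeff (k : ℕ) : Continuous fun y ↦ oneSubRpowCoeff y k := by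
  unfold oneSubRpowCoeff
  fun_prop

lemma neg_oneSubRpowCoeff_succ_mem_Icc (hy : y ∈ Icc (0 : ℝ) 1) (k : ℕ) :
    -oneSubRpowCoeff y (k + 1) ∈ Icc (0 : ℝ) 1 := by
  induction k with
  | zero => simpa [oneSubRpowCoeff_one] using hy
  | succ k ih =>
    have hratio : (((k + 1 : ℕ) : ℝ) - y) / (((k + 1 : ℕ) : ℝ) + 1) ∈ Icc (0 : ℝ) 1 := by
      push_cast
      exact ⟨div_nonneg (by linarith [hy.2, k.cast_nonneg (α := ℝ)]) (by positivity),
        (div_le_one (by positivity)).2 (by linarith [hy.1])⟩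
    rw [oneSubRpowCoeff_succ, ← neg_mul]
    exact ⟨mul_nonneg ih.1 hratio.1, mul_le_one₀ ih.2 hratio.1 hratio.2⟩

lemma mul_mem_Icc_zero_one (hx : x ∈ Icc (0 : ℝ) 1) (hy : y ∈ Icc (0 : ℝ) 1) :
    x * y ∈ Icc (0 : ℝ) 1 :=
  ⟨mul_nonneg hx.1 hy.1, mul_le_one₀ hx.2 hy.1 hy.2⟩

lemma neg_meanOneSubRpowCoeff_succ_mem_Icc (hx : x ∈ Icc (0 : ℝ) 1) (k : ℕ) :
    -meanOneSubRpowCoeff x (k + 1) ∈ Icc (0 : ℝ) 1 := by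
  have hmem : ∀ u ∈ Icc (0 : ℝ) 1, -oneSubRpowCoeff (x * u) (k + 1) ∈ Icc (0 : ℝ) 1 :=
    fun _ hu ↦ neg_oneSubRpowCoeff_succ_mem_Icc (mul_mem_Icc_zero_one hx hu) k
  have hcont := continuous_oneSubRpowCoeff (k + 1)
  rw [meanOneSubRpowCoeff, ← intervalIntegral.integral_neg]
  refine ⟨intervalIntegral.integral_nonneg zero_le_one fun u hu ↦ (hmem u hu).1, ?_⟩
  calc ∫ u in (0 : ℝ)..1, -oneSubRpowCoeff (x * u) (k + 1)
      ≤ ∫ _ in (0 : ℝ)..1, (1 : ℝ) :=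
        intervalIntegral.integral_mono_on zero_le_one
          (Continuous.intervalIntegrable (by fun_prop) _ _) (by simp) fun u hu ↦ (hmem u hu).2
    _ = 1 := by simp

lemma neg_meanOneSubRpowCoeff_succ_mul_le (hx : x ∈ Icc (0 : ℝ) 1) (k : ℕ) :
    -meanOneSubRpowCoeff x (k + 1) * ((k + 1 - x) / (k + 2)) ≤ -meanOneSubRpowCoeff x (k + 2) := by
  have hcont₁ := continuous_oneSubRpowCoeff (k + 1)
  have hcont₂ := continuous_oneSubRpowCoeff (k + 2)
  rw [meanOneSubRpowCoeff, meanOneSubRpowCoeff, ← intervalIntegral.integral_neg,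
    ← intervalIntegral.integral_neg, ← intervalIntegral.integral_mul_const]
  refine intervalIntegral.integral_mono_on zero_le_one
    (Continuous.intervalIntegrable (by fun_prop) _ _)
    (Continuous.intervalIntegrable (by fun_prop) _ _) fun u hu ↦ ?_
  rw [oneSubRpowCoeff_succ _ (k + 1), ← neg_mul]
  refine mul_le_mul_of_nonneg_left ?_
    (neg_oneSubRpowCoeff_succ_mem_Icc (mul_mem_Icc_zero_one hx hu) k).1
  push_cast
  rw [add_assoc, one_add_one_eq_two]
  gcongr
  exact mul_le_of_le_one_right hx.1 hu.2

lemma coeff_substNegLog_exp_neg (x : ℝ) (k : ℕ) :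
    coeff k (substNegLog x (evalNegHom (exp ℝ))) = oneSubRpowCoeff x k := by
  rw [coeff_substNegLog, oneSubRpowCoeff, ascPochhammer_eval_eq_sum_stirlingFirst, Finset.sum_div]
  refine Finset.sum_congr rfl fun l _ ↦ ?_
  have hl : (l.factorial : ℝ) ≠ 0 := by positivity
  rw [evalNegHom, coeff_rescale, coeff_exp, neg_pow x]
  simp only [one_div, map_inv₀, map_natCast]
  field_simp

lemma coeff_substNegLog_oneSubExpNegDivSeries (x : ℝ) (k : ℕ) :
    coeff k (substNegLog x (oneSubExpNegDivSeries ℝ)) = meanOneSubRpowCoeff x k := by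
  have hexpand : ∀ u : ℝ, oneSubRpowCoeff (x * u) k = ∑ l ∈ Finset.range (k + 1),
      (k.stirlingFirst l * (-x) ^ l / k.factorial : ℝ) * u ^ l := fun u ↦ by
    rw [oneSubRpowCoeff, ascPochhammer_eval_eq_sum_stirlingFirst, Finset.sum_div]
    refine Finset.sum_congr rfl fun l _ ↦ ?_
    rw [← neg_mul, mul_pow]
    ring
  simp_rw [meanOneSubRpowCoeff, hexpand]
  rw [coeff_substNegLog, intervalIntegral.integral_finsetSum fun l _ ↦
    Continuous.intervalIntegrable (by fun_prop) _ _]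
  refine Finset.sum_congr rfl fun l _ ↦ ?_
  have hl : (l.factorial : ℝ) ≠ 0 := by positivity
  rw [intervalIntegral.integral_const_mul, integral_pow, oneSubExpNegDivSeries, coeff_mk,
    Nat.factorial_succ, neg_pow x]
  push_cast
  field_simp
  simp

lemma binetCoeff_eq_sum (x : ℝ) (k : ℕ) : binetCoeff x k = ∑ l ∈ Finset.range (k + 1),
    (bernoulli' (l + 1) : ℝ) / (l + 1) * k.stirlingFirst l / k.factorial * x ^ l := by
  rw [binetCoeff, coeff_substNegLog]
  refine Finset.sum_congr rfl fun l _ ↦ ?_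
  have hl : (l.factorial : ℝ) ≠ 0 := by positivity
  rw [binetSeries, coeff_mk, Nat.factorial_succ]
  push_cast
  field_simp

lemma substNegLog_binetSeries_mul (x : ℝ) :
    substNegLog x (binetSeries ℝ) * (1 - substNegLog x (evalNegHom (exp ℝ))) =
      1 - substNegLog x (oneSubExpNegDivSeries ℝ) := by
  simpa only [map_mul, map_sub, map_one] using
    congrArg (substNegLog x) (binetSeries_mul_one_sub_exp_neg ℝ)

lemma C_mul_negLogSeries_mul_substNegLog (x : ℝ) :
    C x * negLogSeries ℝ * substNegLog x (oneSubExpNegDivSeries ℝ) =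
      1 - substNegLog x (evalNegHom (exp ℝ)) := by
  simpa only [map_mul, map_sub, map_one, substNegLog_X] using
    congrArg (substNegLog x) (X_mul_oneSubExpNegDivSeries ℝ)

lemma sum_antidiagonal_binetCoeff_mul (x : ℝ) (n : ℕ) :
    ∑ p ∈ antidiagonal n, binetCoeff x p.1 * -oneSubRpowCoeff x (p.2 + 1) =
      -meanOneSubRpowCoeff x (n + 1) := by
  have hcoeff := congrArg (coeff (n + 1)) (substNegLog_binetSeries_mul x)
  rw [coeff_mul, Finset.Nat.sum_antidiagonal_succ'] at hcoeff
  simpa [coeff_one, coeff_substNegLog_exp_neg, coeff_substNegLog_oneSubExpNegDivSeries,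
    ← coeff_zero_eq_constantCoeff_apply, -coeff_zero_eq_constantCoeff, oneSubRpowCoeff_zero,
    binetCoeff] using hcoeff

lemma monotone_natCast_add_one_sub_div_add_two (hx : -1 ≤ x) :
    Monotone fun j : ℕ ↦ ((j : ℝ) + 1 - x) / (j + 2) := by
  intro i j hij
  have hij : (i : ℝ) ≤ j := by exact_mod_cast hij
  rw [div_le_div_iff₀ (by positivity) (by positivity)]
  nlinarith

theorem binetCoeff_mem_Icc (hx : x ∈ Ioc (0 : ℝ) 1) (k : ℕ) :
    binetCoeff x k ∈ Icc 0 x⁻¹ := by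
  have hx' : x ∈ Icc (0 : ℝ) 1 := Ioc_subset_Icc_self hx
  have hb0 : -oneSubRpowCoeff x (0 + 1) = x := by simp [oneSubRpowCoeff_one]
  have hb : ∀ j, 0 ≤ -oneSubRpowCoeff x (j + 1) :=
    fun j ↦ (neg_oneSubRpowCoeff_succ_mem_Icc hx' j).1
  have hratio : ∀ j : ℕ, -oneSubRpowCoeff x (j + 1 + 1) =
      -oneSubRpowCoeff x (j + 1) * ((j + 1 - x) / (j + 2)) := fun j ↦ by
    rw [oneSubRpowCoeff_succ x (j + 1)]
    push_cast
    ring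
  have hnonneg : ∀ n, 0 ≤ binetCoeff x n :=
    nonneg_of_sum_antidiagonal_eq (b := fun j ↦ -oneSubRpowCoeff x (j + 1))
      (hx.1.trans_eq hb0.symm) hb hratio
      (monotone_natCast_add_one_sub_div_add_two (by linarith [hx.1]))
      (neg_meanOneSubRpowCoeff_succ_mem_Icc hx' 0).1 (neg_meanOneSubRpowCoeff_succ_mul_le hx')
      (sum_antidiagonal_binetCoeff_mul x)
  have hle := mul_le_of_sum_antidiagonal_eq (b := fun j ↦ -oneSubRpowCoeff x (j + 1)) hb hnonneg
    (sum_antidiagonal_binetCoeff_mul x) k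
  rw [hb0] at hle
  refine ⟨hnonneg k, (le_div_iff₀ hx.1).2 ?_ |>.trans_eq (one_div x)⟩
  exact hle.trans (neg_meanOneSubRpowCoeff_succ_mem_Icc hx' k).2

end BinetCoeff

section Evaluation

open Finset.HasAntidiagonal (antidiagonal mem_antidiagonal)
open PowerSeries Set

variable {x t w : ℝ}

lemma hasSum_coeff_mul_mul_pow {f g : ℝ⟦X⟧} {F G : ℝ} (hf : HasSum (fun k ↦ coeff k f * w ^ k) F)
    (hg : HasSum (fun k ↦ coeff k g * w ^ k) G) :
    HasSum (fun k ↦ coeff k (f * g) * w ^ k) (F * G) := by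
  have hcauchy : (fun k ↦ coeff k (f * g) * w ^ k) = fun k ↦
      ∑ p ∈ antidiagonal k,
        (coeff p.1 f * w ^ p.1) * (coeff p.2 g * w ^ p.2) := by
    ext k
    rw [coeff_mul, Finset.sum_mul]
    refine Finset.sum_congr rfl fun p hp ↦ ?_
    rw [← mem_antidiagonal.1 hp, pow_add]
    ring
  rw [hcauchy, ← hf.tsum_eq, ← hg.tsum_eq,
    tsum_mul_tsum_eq_tsum_sum_antidiagonal_of_summable_norm hf.summable.norm hg.summable.norm]
  exact (summable_norm_sum_mul_antidiagonal_of_summable_norm hf.summable.norm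
    hg.summable.norm).of_norm.hasSum

lemma summable_mul_pow_of_abs_le {c : ℕ → ℝ} {M : ℝ} (hw : |w| < 1) (hc : ∀ k, |c k| ≤ M) :
    Summable fun k ↦ c k * w ^ k := by
  refine Summable.of_norm_bounded ((summable_geometric_of_lt_one (abs_nonneg w) hw).mul_left M)
    fun k ↦ ?_
  rw [Real.norm_eq_abs, abs_mul, abs_pow]
  exact mul_le_mul_of_nonneg_right (hc k) (by positivity)

lemma hasSum_oneSubRpowCoeff_mul_pow (hw : |w| < 1) (y : ℝ) :
    HasSum (fun k ↦ oneSubRpowCoeff y k * w ^ k) ((1 - w) ^ y) := by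
  have hchoose : ∀ k : ℕ, Ring.choose (-y + k - 1) k = oneSubRpowCoeff y k := fun k ↦ by
    have hfac : (k.factorial : ℝ) ≠ 0 := by positivity
    rw [oneSubRpowCoeff, eq_div_iff hfac, mul_comm, ← nsmul_eq_mul, Ring.choose,
      ← Polynomial.ascPochhammer_smeval_eq_eval,
      ← Ring.factorial_nsmul_multichoose_eq_ascPochhammer]
    congr 2
    ring
  have hsum := (Real.one_div_one_sub_rpow_hasFPowerSeriesOnBall_zero (-y)).hasSum (y := w)
    (by simpa [enorm_eq_nnnorm, ← NNReal.coe_lt_one] using hw)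
  rw [zero_add, Real.rpow_neg (by linarith [(abs_lt.1 hw).2]), one_div, inv_inv] at hsum
  simpa only [FormalMultilinearSeries.ofScalars_apply_eq, hchoose, smul_eq_mul] using hsum

lemma hasSum_coeff_C_mul_negLogSeries_mul_pow (hw : |w| < 1) (x : ℝ) :
    HasSum (fun k ↦ coeff k (C x * negLogSeries ℝ) * w ^ k) (x * -Real.log (1 - w)) := by
  have hlog : HasSum (fun k ↦ coeff k (negLogSeries ℝ) * w ^ k) (-Real.log (1 - w)) := by
    rw [← hasSum_nat_add_iff' 1]
    simpa [negLogSeries, div_eq_inv_mul] using Real.hasSum_pow_div_log_of_abs_lt_one hw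
  simpa only [coeff_C_mul, mul_assoc] using hlog.mul_left x

lemma hasSum_coeff_one_sub_mul_pow {f : ℝ⟦X⟧} {F : ℝ} (hf : HasSum (fun k ↦ coeff k f * w ^ k) F) :
    HasSum (fun k ↦ coeff k (1 - f) * w ^ k) (1 - F) := by
  have hone : HasSum (fun k ↦ coeff k (1 : ℝ⟦X⟧) * w ^ k) 1 := by
    simpa using hasSum_single (f := fun k ↦ coeff k (1 : ℝ⟦X⟧) * w ^ k) 0
      fun k hk ↦ by simp [coeff_one, hk]
  simpa only [map_sub, sub_mul] using hone.sub hf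

lemma summable_coeff_substNegLog_oneSubExpNegDivSeries_mul_pow (hx : x ∈ Icc (0 : ℝ) 1)
    (hw : |w| < 1) :
    Summable fun k ↦ coeff k (substNegLog x (oneSubExpNegDivSeries ℝ)) * w ^ k := by
  refine summable_mul_pow_of_abs_le (M := 1) hw fun k ↦ ?_
  rw [coeff_substNegLog_oneSubExpNegDivSeries]
  cases k with
  | zero => simp [meanOneSubRpowCoeff, oneSubRpowCoeff_zero]
  | succ k =>
    obtain ⟨h0, h1⟩ := neg_meanOneSubRpowCoeff_succ_mem_Icc hx k
    rwa [← abs_neg, abs_of_nonneg h0]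

theorem hasSum_binetCoeff_mul_one_sub_exp_neg_pow (hx : x ∈ Ioc (0 : ℝ) 1) (ht : 0 < t) :
    HasSum (fun k ↦ binetCoeff x k * (1 - Real.exp (-t)) ^ k) (binetKernel (x * t)) := by
  have hw : |1 - Real.exp (-t)| < 1 := by
    rw [abs_of_pos (one_sub_exp_neg_pos ht)]
    linarith [Real.exp_pos (-t)]
  have hxt : 0 < x * t := mul_pos hx.1 ht
  have hexp : HasSum (fun k ↦ coeff k (1 - substNegLog x (evalNegHom (exp ℝ))) *
      (1 - Real.exp (-t)) ^ k) (1 - Real.exp (-(x * t))) := by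
    refine hasSum_coeff_one_sub_mul_pow ?_
    simpa only [coeff_substNegLog_exp_neg, sub_sub_cancel, ← Real.exp_mul, neg_mul, mul_comm t]
      using hasSum_oneSubRpowCoeff_mul_pow hw x
  obtain ⟨R, hR⟩ :=
    summable_coeff_substNegLog_oneSubExpNegDivSeries_mul_pow (Ioc_subset_Icc_self hx) hw
  obtain ⟨B, hB⟩ : Summable fun k ↦ binetCoeff x k * (1 - Real.exp (-t)) ^ k :=
    summable_mul_pow_of_abs_le hw fun k ↦
      (abs_of_nonneg (binetCoeff_mem_Icc hx k).1).trans_le (binetCoeff_mem_Icc hx k).2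
  have hR_eq : x * t * R = 1 - Real.exp (-(x * t)) := by
    have hprod := hasSum_coeff_mul_mul_pow (hasSum_coeff_C_mul_negLogSeries_mul_pow hw x) hR
    rw [C_mul_negLogSeries_mul_substNegLog, sub_sub_cancel, Real.log_exp, neg_neg] at hprod
    exact hprod.unique hexp
  have hB_eq : B * (1 - Real.exp (-(x * t))) = 1 - R := by
    have hprod := hasSum_coeff_mul_mul_pow hB hexp
    rw [substNegLog_binetSeries_mul] at hprod
    exact hprod.unique (hasSum_coeff_one_sub_mul_pow hR)
  suffices h : binetKernel (x * t) = B from h ▸ hB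
  refine mul_left_cancel₀ (one_sub_exp_neg_pos hxt).ne' ?_
  rw [one_sub_exp_neg_mul_binetKernel hxt, mul_comm _ B, hB_eq, ← hR_eq,
    mul_div_cancel_left₀ R hxt.ne']

end Evaluation

section RisingProd

lemma risingProdR_pos {x : ℝ} (hx : -1 < x) (k : ℕ) : 0 < risingProdR x k :=
  Finset.prod_pos fun i _ ↦ by linarith [i.cast_nonneg (α := ℝ)]

lemma risingProdR_succ (x : ℝ) (k : ℕ) : risingProdR x (k + 1) = risingProdR x k * (x + k + 1) :=
  Finset.prod_range_succ _ _

lemma risingProdR_succ' (x : ℝ) (k : ℕ) :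
    risingProdR x (k + 1) = (x + 1) * risingProdR (x + 1) k := by
  rw [risingProdR, risingProdR, Finset.prod_range_succ', mul_comm, Nat.cast_zero, add_zero]
  refine congrArg _ (Finset.prod_congr rfl fun i _ ↦ ?_)
  push_cast
  ring

end RisingProd

section BetaIntegrals

open MeasureTheory Set

lemma hasSum_of_tsum_ofReal_eq {ι : Type*} {f : ι → ℝ} {c : ℝ} (hf : ∀ i, 0 ≤ f i) (hc : 0 ≤ c)
    (h : ∑' i, ENNReal.ofReal (f i) = ENNReal.ofReal c) : HasSum f c := by
  have hsum := ENNReal.hasSum_toReal (h.trans_ne ENNReal.ofReal_ne_top)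
  rw [← ENNReal.tsum_toReal_eq fun _ ↦ ENNReal.ofReal_ne_top, h, ENNReal.toReal_ofReal hc] at hsum
  simpa only [ENNReal.toReal_ofReal (hf _)] using hsum

lemma tsum_lintegral_lintegral_eq_lintegral_lintegral_tsum {α β ι : Type*} [MeasurableSpace α]
    [MeasurableSpace β] [Countable ι] {μ : Measure α} {ν : Measure β} [SFinite μ] [SFinite ν]
    {f : ι → α → β → ENNReal} (hf : ∀ i, Measurable (Function.uncurry (f i))) :
    ∑' i, ∫⁻ x, ∫⁻ y, f i x y ∂ν ∂μ = ∫⁻ y, ∫⁻ x, ∑' i, f i x y ∂μ ∂ν := by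
  have hswap := fun i ↦ lintegral_lintegral_swap (μ := μ) (ν := ν) (hf i).aemeasurable
  simp_rw [hswap]
  rw [← lintegral_tsum fun i ↦ (Measurable.lintegral_prod_left (hf i)).aemeasurable]
  refine lintegral_congr fun y ↦ (lintegral_tsum fun i ↦ ?_).symm
  exact ((hf i).comp measurable_prodMk_right).aemeasurable

lemma setLIntegral_ofReal_eq {α : Type*} [MeasurableSpace α] {μ : Measure α} {s : Set α}
    {f : α → ℝ} (hs : MeasurableSet s) (hf : IntegrableOn f s μ) (hf0 : ∀ x ∈ s, 0 ≤ f x) :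
    ∫⁻ x in s, ENNReal.ofReal (f x) ∂μ = ENNReal.ofReal (∫ x in s, f x ∂μ) :=
  (ofReal_integral_eq_lintegral_ofReal hf (ae_restrict_of_forall_mem hs hf0)).symm

variable {a p q r v : ℝ}

lemma lintegral_rpow_sub_one_mul_exp_neg_mul (ha : 0 < a) (hr : 0 < r) :
    ∫⁻ t in Ioi (0 : ℝ), ENNReal.ofReal (t ^ (a - 1) * Real.exp (-(r * t))) =
      ENNReal.ofReal (r ^ (-a) * Real.Gamma a) := by
  rw [setLIntegral_ofReal_eq measurableSet_Ioi (integrableOn_rpow_sub_one_mul_exp_neg_mul ha hr)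
    fun t (ht : 0 < t) ↦ by positivity, Real.integral_rpow_mul_exp_neg_mul_Ioi ha hr, one_div,
    Real.inv_rpow hr.le, Real.rpow_neg hr.le]

lemma lintegral_rpow_sub_one_mul_exp_neg_one_add_mul (hp : 0 < p) (hr : 0 < r) :
    ∫⁻ y in Ioi (0 : ℝ), ENNReal.ofReal (y ^ (p - 1) * Real.exp (-((1 + y) * r))) =
      ENNReal.ofReal (Real.Gamma p * (r ^ (-p) * Real.exp (-r))) := by
  have hsplit : ∀ y : ℝ, y ^ (p - 1) * Real.exp (-((1 + y) * r)) =
      Real.exp (-r) * (y ^ (p - 1) * Real.exp (-(r * y))) := fun y ↦ by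
    rw [add_mul, neg_add, Real.exp_add, one_mul, mul_comm y r]
    ring
  simp_rw [hsplit, ENNReal.ofReal_mul (Real.exp_pos (-r)).le]
  rw [lintegral_const_mul' _ _ ENNReal.ofReal_ne_top, lintegral_rpow_sub_one_mul_exp_neg_mul hp hr,
    ← ENNReal.ofReal_mul (Real.exp_pos (-r)).le]
  ring_nf

/- Both iterated integrals of `y ^ (p - 1) * s ^ (p + q - 1) * exp (-((1 + y) * s))` reduce to
Gamma integrals. -/
lemma lintegral_rpow_sub_one_mul_one_add_rpow_neg (hp : 0 < p) (hq : 0 < q) :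
    ∫⁻ y in Ioi (0 : ℝ), ENNReal.ofReal (y ^ (p - 1) * (1 + y) ^ (-(p + q))) =
      ENNReal.ofReal (Real.Gamma p * Real.Gamma q / Real.Gamma (p + q)) := by
  have hpq : 0 < p + q := add_pos hp hq
  have hΓp := Real.Gamma_pos_of_pos hp
  have hΓ := Real.Gamma_pos_of_pos hpq
  have hs_integral : ∀ y ∈ Ioi (0 : ℝ), ∫⁻ s in Ioi (0 : ℝ),
      ENNReal.ofReal (y ^ (p - 1) * s ^ (p + q - 1) * Real.exp (-((1 + y) * s))) =
      ENNReal.ofReal (Real.Gamma (p + q)) *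
        ENNReal.ofReal (y ^ (p - 1) * (1 + y) ^ (-(p + q))) := by
    intro y (hy : 0 < y)
    simp_rw [mul_assoc, ENNReal.ofReal_mul (Real.rpow_nonneg hy.le _)]
    rw [lintegral_const_mul' _ _ ENNReal.ofReal_ne_top,
      lintegral_rpow_sub_one_mul_exp_neg_mul hpq (by positivity),
      ENNReal.ofReal_mul (by positivity)]
    ring
  have hy_integral : ∀ s ∈ Ioi (0 : ℝ), ∫⁻ y in Ioi (0 : ℝ),
      ENNReal.ofReal (y ^ (p - 1) * s ^ (p + q - 1) * Real.exp (-((1 + y) * s))) =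
      ENNReal.ofReal (Real.Gamma p) * ENNReal.ofReal (s ^ (q - 1) * Real.exp (-(1 * s))) := by
    intro s (hs : 0 < s)
    have hpow : s ^ (q - 1) = s ^ (p + q - 1) * s ^ (-p) := by
      rw [← Real.rpow_add hs]
      ring_nf
    have hnonneg : 0 ≤ s ^ (p + q - 1) := by positivity
    simp_rw [mul_comm _ (s ^ (p + q - 1)), mul_assoc, ENNReal.ofReal_mul hnonneg]
    rw [lintegral_const_mul' _ _ ENNReal.ofReal_ne_top,
      lintegral_rpow_sub_one_mul_exp_neg_one_add_mul hp hs, ← ENNReal.ofReal_mul hnonneg,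
      ← ENNReal.ofReal_mul hΓp.le, hpow, one_mul]
    ring_nf
  have hswap : ∫⁻ y in Ioi (0 : ℝ), ∫⁻ s in Ioi (0 : ℝ), _ = ∫⁻ s in Ioi (0 : ℝ), _ :=
    lintegral_lintegral_swap (f := fun y s ↦
      ENNReal.ofReal (y ^ (p - 1) * s ^ (p + q - 1) * Real.exp (-((1 + y) * s))))
      (Measurable.aemeasurable (by unfold Function.uncurry; fun_prop))
  rw [setLIntegral_congr_fun measurableSet_Ioi hs_integral,
    setLIntegral_congr_fun measurableSet_Ioi hy_integral,
    lintegral_const_mul' _ _ ENNReal.ofReal_ne_top, lintegral_const_mul' _ _ ENNReal.ofReal_ne_top,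
    lintegral_rpow_sub_one_mul_exp_neg_mul hq one_pos, Real.one_rpow, one_mul] at hswap
  rw [ENNReal.ofReal_div_of_pos hΓ, ENNReal.ofReal_mul hΓp.le, ← hswap, mul_comm,
    ENNReal.mul_div_cancel_right (by simpa using hΓ) ENNReal.ofReal_ne_top]

lemma integrableOn_rpow_sub_one_mul_one_add_rpow_neg (hp : 0 < p) (hq : 0 < q) :
    IntegrableOn (fun y : ℝ ↦ y ^ (p - 1) * (1 + y) ^ (-(p + q))) (Ioi 0) := by
  refine (lintegral_ofReal_ne_top_iff_integrable
    (Measurable.aestronglyMeasurable (by fun_prop))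
    (ae_restrict_of_forall_mem measurableSet_Ioi fun y (hy : 0 < y) ↦ ?_)).1 ?_
  · exact mul_nonneg (by positivity) (by positivity)
  · rw [lintegral_rpow_sub_one_mul_one_add_rpow_neg hp hq]
    exact ENNReal.ofReal_ne_top

lemma integral_rpow_sub_one_mul_one_add_rpow_neg (hp : 0 < p) (hq : 0 < q) :
    ∫ y in Ioi (0 : ℝ), y ^ (p - 1) * (1 + y) ^ (-(p + q)) =
      Real.Gamma p * Real.Gamma q / Real.Gamma (p + q) := by
  have hnonneg : 0 ≤ Real.Gamma p * Real.Gamma q / Real.Gamma (p + q) :=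
    div_nonneg (mul_pos (Real.Gamma_pos_of_pos hp) (Real.Gamma_pos_of_pos hq)).le
      (Real.Gamma_pos_of_pos (add_pos hp hq)).le
  rw [← ENNReal.toReal_ofReal hnonneg, ← lintegral_rpow_sub_one_mul_one_add_rpow_neg hp hq,
    integral_eq_lintegral_of_nonneg_ae
      (ae_restrict_of_forall_mem measurableSet_Ioi fun y (hy : 0 < y) ↦ ?_)
      (Measurable.aestronglyMeasurable (by fun_prop))]
  exact mul_nonneg (by positivity) (by positivity)

lemma integrableOn_exp_neg_mul_mul_one_sub_exp_neg_pow (hv : 0 < v) (k : ℕ) :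
    IntegrableOn (fun t ↦ Real.exp (-(v * t)) * (1 - Real.exp (-t)) ^ k) (Ioi 0) := by
  have hexp : IntegrableOn (fun t ↦ Real.exp (-(v * t))) (Ioi 0) := by
    simpa only [neg_mul] using exp_neg_integrableOn_Ioi 0 hv
  refine hexp.mono' (Continuous.aestronglyMeasurable (by fun_prop))
    (ae_restrict_of_forall_mem measurableSet_Ioi fun t (ht : 0 < t) ↦ ?_)
  have hpos := one_sub_exp_neg_pos ht
  rw [Real.norm_of_nonneg (by positivity)]
  exact mul_le_of_le_one_right (Real.exp_pos _).le
    (pow_le_one₀ hpos.le (by linarith [Real.exp_pos (-t)]))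

lemma integral_exp_neg_mul_mul_one_sub_exp_neg_pow (hv : 0 < v) (k : ℕ) :
    ∫ t in Ioi (0 : ℝ), Real.exp (-(v * t)) * (1 - Real.exp (-t)) ^ k =
      k.factorial / (v * risingProdR v k) := by
  induction k generalizing v with
  | zero =>
    have hexp := integral_exp_mul_Ioi (neg_lt_zero.2 hv) 0
    simpa [risingProdR] using hexp
  | succ k ih =>
    have hstep : ∀ t, Real.exp (-(v * t)) * (1 - Real.exp (-t)) ^ (k + 1) =
        Real.exp (-(v * t)) * (1 - Real.exp (-t)) ^ k -
          Real.exp (-((v + 1) * t)) * (1 - Real.exp (-t)) ^ k := fun t ↦ by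
      rw [add_mul, one_mul, neg_add, Real.exp_add]
      ring
    have hv1 : 0 < v + 1 := by positivity
    simp_rw [hstep]
    rw [integral_sub (integrableOn_exp_neg_mul_mul_one_sub_exp_neg_pow hv k)
      (integrableOn_exp_neg_mul_mul_one_sub_exp_neg_pow hv1 k), ih hv, ih hv1, ← risingProdR_succ',
      risingProdR_succ, Nat.factorial_succ]
    have hprod := (risingProdR_pos (by linarith : -1 < v) k).ne'
    have hfactor : v + k + 1 ≠ 0 := by positivity
    push_cast
    field_simp
    ring

lemma lintegral_exp_neg_mul_mul_one_sub_exp_neg_pow (hv : 0 < v) (hr : 0 < r) (k : ℕ) :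
    ∫⁻ s in Ioi (0 : ℝ),
        ENNReal.ofReal (Real.exp (-(v * (r * s))) * (1 - Real.exp (-(r * s))) ^ k) =
      ENNReal.ofReal (r⁻¹ * (k.factorial / (v * risingProdR v k))) := by
  have hint := integrableOn_exp_neg_mul_mul_one_sub_exp_neg_pow hv k
  rw [← mul_zero r, ← integrableOn_Ioi_comp_mul_left_iff _ _ hr] at hint
  rw [setLIntegral_ofReal_eq measurableSet_Ioi hint fun s (hs : 0 < s) ↦
      mul_nonneg (Real.exp_pos _).le (pow_nonneg (one_sub_exp_neg_pos (mul_pos hr hs)).le k),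
    integral_comp_mul_left_Ioi (fun t ↦ Real.exp (-(v * t)) * (1 - Real.exp (-t)) ^ k) 0 hr,
    mul_zero, integral_exp_neg_mul_mul_one_sub_exp_neg_pow hv, smul_eq_mul]

lemma Gamma_add_natCast_eq_ascPochhammer_eval_mul_Gamma (ha : 0 < a) (l : ℕ) :
    Real.Gamma (a + l) = (ascPochhammer ℝ l).eval a * Real.Gamma a := by
  induction l with
  | zero => simp
  | succ l ih =>
    rw [Nat.cast_succ, ← add_assoc, Real.Gamma_add_one (by positivity), ih,
      ascPochhammer_succ_eval]
    ring

end BetaIntegrals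

section FaulhaberSeries

open MeasureTheory Set

/-- The numerators of the Faulhaber series at exponent `a`: those of the paper up to the sign
`(-1) ^ k * S1 k l = (-1) ^ l * k.stirlingFirst l`, with the term `k = 0` included. -/
noncomputable def faulhaberCoeff (a : ℝ) (k : ℕ) : ℝ := ∑ l ∈ Finset.range (k + 1),
  (ascPochhammer ℝ l).eval a / (l + 1).factorial * (bernoulli' (l + 1) : ℝ) * k.stirlingFirst l

variable {a s v y : ℝ}

lemma inv_one_add_mem_Ioc (hy : 0 ≤ y) : (1 + y)⁻¹ ∈ Ioc (0 : ℝ) 1 :=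
  ⟨by positivity, inv_le_one_of_one_le₀ (by linarith)⟩

lemma measurable_binetCoeff (k : ℕ) : Measurable fun x ↦ binetCoeff x k := by
  simp_rw [binetCoeff_eq_sum]
  fun_prop

lemma rpow_neg_mul_inv_one_add_pow_succ (hy : 0 < y) (l : ℕ) :
    y ^ (-a) * (1 + y)⁻¹ ^ (l + 1) = y ^ (1 - a - 1) * (1 + y) ^ (-(1 - a + (a + l))) := by
  rw [show -(1 - a + (a + l)) = -((l + 1 : ℕ) : ℝ) by push_cast; ring,
    Real.rpow_neg (by positivity : 0 ≤ 1 + y), Real.rpow_natCast, inv_pow, sub_sub_cancel_left]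

lemma integrableOn_rpow_neg_mul_inv_one_add_pow_succ (ha0 : 0 < a) (ha1 : a < 1) (l : ℕ) :
    IntegrableOn (fun y : ℝ ↦ y ^ (-a) * (1 + y)⁻¹ ^ (l + 1)) (Ioi 0) :=
  (integrableOn_rpow_sub_one_mul_one_add_rpow_neg (sub_pos.2 ha1)
    (add_pos_of_pos_of_nonneg ha0 l.cast_nonneg)).congr_fun
    (fun _ hy ↦ (rpow_neg_mul_inv_one_add_pow_succ hy l).symm) measurableSet_Ioi

lemma integral_rpow_neg_mul_inv_one_add_pow_succ (ha0 : 0 < a) (ha1 : a < 1) (l : ℕ) :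
    ∫ y in Ioi (0 : ℝ), y ^ (-a) * (1 + y)⁻¹ ^ (l + 1) =
      Real.Gamma (1 - a) * Real.Gamma a * ((ascPochhammer ℝ l).eval a / l.factorial) := by
  rw [setIntegral_congr_fun measurableSet_Ioi fun _ hy ↦ rpow_neg_mul_inv_one_add_pow_succ hy l,
    integral_rpow_sub_one_mul_one_add_rpow_neg (sub_pos.2 ha1)
      (add_pos_of_pos_of_nonneg ha0 l.cast_nonneg),
    Gamma_add_natCast_eq_ascPochhammer_eval_mul_Gamma ha0,
    show 1 - a + (a + l) = l + 1 by ring, Real.Gamma_nat_eq_factorial]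
  ring

lemma rpow_neg_mul_binetCoeff_mul_inv (a y : ℝ) (k : ℕ) :
    y ^ (-a) * binetCoeff (1 + y)⁻¹ k * (1 + y)⁻¹ = ∑ l ∈ Finset.range (k + 1),
      (bernoulli' (l + 1) : ℝ) / (l + 1) * k.stirlingFirst l / k.factorial *
        (y ^ (-a) * (1 + y)⁻¹ ^ (l + 1)) := by
  rw [binetCoeff_eq_sum, Finset.mul_sum, Finset.sum_mul]
  exact Finset.sum_congr rfl fun l _ ↦ by ring

lemma integrableOn_rpow_neg_mul_binetCoeff (ha0 : 0 < a) (ha1 : a < 1) (k : ℕ) :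
    IntegrableOn (fun y : ℝ ↦ y ^ (-a) * binetCoeff (1 + y)⁻¹ k * (1 + y)⁻¹) (Ioi 0) := by
  simp_rw [rpow_neg_mul_binetCoeff_mul_inv]
  exact integrable_finsetSum _ fun l _ ↦
    (integrableOn_rpow_neg_mul_inv_one_add_pow_succ ha0 ha1 l).const_mul _

lemma integral_rpow_neg_mul_binetCoeff (ha0 : 0 < a) (ha1 : a < 1) (k : ℕ) :
    ∫ y in Ioi (0 : ℝ), y ^ (-a) * binetCoeff (1 + y)⁻¹ k * (1 + y)⁻¹ =
      Real.Gamma (1 - a) * Real.Gamma a * (faulhaberCoeff a k / k.factorial) := by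
  simp_rw [rpow_neg_mul_binetCoeff_mul_inv]
  rw [integral_finsetSum _ fun l _ ↦
    (integrableOn_rpow_neg_mul_inv_one_add_pow_succ ha0 ha1 l).const_mul _, faulhaberCoeff,
    Finset.sum_div, Finset.mul_sum]
  refine Finset.sum_congr rfl fun l _ ↦ ?_
  rw [integral_const_mul, integral_rpow_neg_mul_inv_one_add_pow_succ ha0 ha1, Nat.factorial_succ]
  push_cast
  field_simp

lemma rpow_neg_mul_binetCoeff_nonneg (a : ℝ) (hy : 0 ≤ y) (k : ℕ) :
    0 ≤ y ^ (-a) * binetCoeff (1 + y)⁻¹ k :=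
  mul_nonneg (by positivity) (binetCoeff_mem_Icc (inv_one_add_mem_Ioc hy) k).1

lemma faulhaberCoeff_nonneg (ha0 : 0 < a) (ha1 : a < 1) (k : ℕ) : 0 ≤ faulhaberCoeff a k := by
  have hΓ : 0 < Real.Gamma (1 - a) * Real.Gamma a :=
    mul_pos (Real.Gamma_pos_of_pos (sub_pos.2 ha1)) (Real.Gamma_pos_of_pos ha0)
  have hnonneg := setIntegral_nonneg (μ := volume) measurableSet_Ioi fun y (hy : 0 < y) ↦
    mul_nonneg (rpow_neg_mul_binetCoeff_nonneg a hy.le k) (inv_one_add_mem_Ioc hy.le).1.le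
  rw [integral_rpow_neg_mul_binetCoeff ha0 ha1, mul_nonneg_iff_of_pos_left hΓ] at hnonneg
  simpa [Nat.factorial_ne_zero] using mul_nonneg hnonneg (k.factorial.cast_nonneg (α := ℝ))

/-- The `k`-th term of the expansion of `y ^ (-a) * exp (-(v * ((1 + y) * s))) * binetKernel s` in
powers of `1 - exp (-((1 + y) * s))`. -/
noncomputable def mixedBinetTerm (a v : ℝ) (k : ℕ) (y s : ℝ) : ℝ :=
  y ^ (-a) * binetCoeff (1 + y)⁻¹ k *
    (Real.exp (-(v * ((1 + y) * s))) * (1 - Real.exp (-((1 + y) * s))) ^ k)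

lemma measurable_mixedBinetTerm (a v : ℝ) (k : ℕ) :
    Measurable (Function.uncurry (mixedBinetTerm a v k)) := by
  have := measurable_binetCoeff k
  unfold mixedBinetTerm Function.uncurry
  fun_prop

lemma mixedBinetTerm_nonneg (a v : ℝ) (k : ℕ) (hy : 0 < y) (hs : 0 < s) :
    0 ≤ mixedBinetTerm a v k y s := by
  have hpos := one_sub_exp_neg_pos (mul_pos (by linarith : 0 < 1 + y) hs)
  exact mul_nonneg (rpow_neg_mul_binetCoeff_nonneg a hy.le k) (by positivity)

lemma lintegral_lintegral_mixedBinetTerm (ha0 : 0 < a) (ha1 : a < 1) (hv : 0 < v) (k : ℕ) :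
    ∫⁻ y in Ioi (0 : ℝ), ∫⁻ s in Ioi (0 : ℝ), ENNReal.ofReal (mixedBinetTerm a v k y s) =
      ENNReal.ofReal (Real.Gamma (1 - a) * Real.Gamma a / v *
        (faulhaberCoeff a k / risingProdR v k)) := by
  set B := (k.factorial : ℝ) / (v * risingProdR v k) with hB_def
  have hprod := risingProdR_pos (by linarith : -1 < v) k
  have hB : 0 ≤ B := by positivity
  have hinner : ∀ y ∈ Ioi (0 : ℝ), ∫⁻ s in Ioi (0 : ℝ), ENNReal.ofReal (mixedBinetTerm a v k y s) =
      ENNReal.ofReal (y ^ (-a) * binetCoeff (1 + y)⁻¹ k * (1 + y)⁻¹ * B) := by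
    intro y (hy : 0 < y)
    have hy0 := rpow_neg_mul_binetCoeff_nonneg a hy.le k
    simp_rw [mixedBinetTerm, ENNReal.ofReal_mul hy0]
    rw [lintegral_const_mul' _ _ ENNReal.ofReal_ne_top,
      lintegral_exp_neg_mul_mul_one_sub_exp_neg_pow hv (by positivity), ← ENNReal.ofReal_mul hy0,
      mul_assoc _ _ B]
  rw [setLIntegral_congr_fun measurableSet_Ioi hinner, setLIntegral_ofReal_eq measurableSet_Ioi
      ((integrableOn_rpow_neg_mul_binetCoeff ha0 ha1 k).mul_const B) fun y (hy : 0 < y) ↦ mul_nonneg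
        (mul_nonneg (rpow_neg_mul_binetCoeff_nonneg a hy.le k)
          (inv_one_add_mem_Ioc hy.le).1.le) hB,
    integral_mul_const, integral_rpow_neg_mul_binetCoeff ha0 ha1, hB_def]
  field_simp

lemma tsum_ofReal_mixedBinetTerm (a v : ℝ) (hy : 0 < y) (hs : 0 < s) :
    ∑' k, ENNReal.ofReal (mixedBinetTerm a v k y s) =
      ENNReal.ofReal (binetKernel s * (y ^ (-a) * Real.exp (-((1 + y) * (v * s))))) := by
  have hy1 : 0 < 1 + y := by positivity
  have hsum := (hasSum_binetCoeff_mul_one_sub_exp_neg_pow (inv_one_add_mem_Ioc hy.le)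
    (mul_pos hy1 hs)).mul_left (y ^ (-a) * Real.exp (-(v * ((1 + y) * s))))
  rw [inv_mul_cancel_left₀ hy1.ne'] at hsum
  have hterm : HasSum (fun k ↦ mixedBinetTerm a v k y s)
      (binetKernel s * (y ^ (-a) * Real.exp (-((1 + y) * (v * s))))) := by
    rw [mul_left_comm (1 + y), mul_comm (binetKernel s)]
    refine hsum.congr_fun fun k ↦ ?_
    rw [mixedBinetTerm]
    ring
  rw [← hterm.tsum_eq,
    ENNReal.ofReal_tsum_of_nonneg (fun k ↦ mixedBinetTerm_nonneg a v k hy hs) hterm.summable]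

lemma lintegral_lintegral_tsum_mixedBinetTerm (ha0 : 0 < a) (ha1 : a < 1) (hv : 0 < v) :
    ∫⁻ s in Ioi (0 : ℝ), ∫⁻ y in Ioi (0 : ℝ), ∑' k, ENNReal.ofReal (mixedBinetTerm a v k y s) =
      ENNReal.ofReal (Real.Gamma (1 - a) * v ^ (a - 1) * binetLaplace a v) := by
  have hinner : ∀ s ∈ Ioi (0 : ℝ),
      ∫⁻ y in Ioi (0 : ℝ), ∑' k, ENNReal.ofReal (mixedBinetTerm a v k y s) =
      ENNReal.ofReal (Real.Gamma (1 - a) * v ^ (a - 1) *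
        (s ^ (a - 1) * Real.exp (-(v * s)) * binetKernel s)) := by
    intro s (hs : 0 < s)
    have hker := binetKernel_nonneg hs
    have hgamma := lintegral_rpow_sub_one_mul_exp_neg_one_add_mul (sub_pos.2 ha1) (mul_pos hv hs)
    rw [sub_sub_cancel_left, neg_sub, Real.mul_rpow hv.le hs.le] at hgamma
    rw [setLIntegral_congr_fun measurableSet_Ioi fun y hy ↦ tsum_ofReal_mixedBinetTerm a v hy hs]
    simp_rw [ENNReal.ofReal_mul hker]
    rw [lintegral_const_mul' _ _ ENNReal.ofReal_ne_top, hgamma, ← ENNReal.ofReal_mul hker]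
    ring_nf
  rw [setLIntegral_congr_fun measurableSet_Ioi hinner, setLIntegral_ofReal_eq measurableSet_Ioi
    ((integrableOn_binetLaplace ha0 hv).const_mul _), integral_const_mul, binetLaplace]
  intro s (hs : 0 < s)
  have hker := binetKernel_nonneg hs
  positivity

/- With `x = 1 / (1 + y)`, integrating the expansion of `binetKernel (x * t)` in powers of
`1 - exp (-t)` against a Beta weight in `x` turns the powers of `x` into Pochhammer symbols. -/
theorem hasSum_faulhaberCoeff_div_risingProdR (ha0 : 0 < a) (ha1 : a < 1) (hv : 0 < v) :
    HasSum (fun k ↦ faulhaberCoeff a k / risingProdR v k)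
      (v ^ a * binetLaplace a v / Real.Gamma a) := by
  have hΓ := Real.Gamma_pos_of_pos (sub_pos.2 ha1)
  set c := Real.Gamma (1 - a) * Real.Gamma a / v with hc_def
  have hc : 0 < c := by positivity
  have hterm : ∀ k, 0 ≤ faulhaberCoeff a k / risingProdR v k := fun k ↦
    div_nonneg (faulhaberCoeff_nonneg ha0 ha1 k) (risingProdR_pos (by linarith) k).le
  have hsum : HasSum (fun k ↦ c * (faulhaberCoeff a k / risingProdR v k))
      (Real.Gamma (1 - a) * v ^ (a - 1) * binetLaplace a v) := by
    refine hasSum_of_tsum_ofReal_eq (fun k ↦ mul_nonneg hc.le (hterm k))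
      (mul_nonneg (by positivity) (binetLaplace_nonneg a v)) ?_
    simp_rw [hc_def, ← lintegral_lintegral_mixedBinetTerm ha0 ha1 hv]
    rw [← lintegral_lintegral_tsum_mixedBinetTerm ha0 ha1 hv]
    exact tsum_lintegral_lintegral_eq_lintegral_lintegral_tsum fun k ↦
      (measurable_mixedBinetTerm a v k).ennreal_ofReal
  have hvalue : Real.Gamma (1 - a) * v ^ (a - 1) * binetLaplace a v =
      c * (v ^ a * binetLaplace a v / Real.Gamma a) := by
    rw [hc_def, Real.rpow_sub_one hv.ne']
    field_simp
  rwa [hvalue, hasSum_mul_left_iff hc.ne'] at hsum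

end FaulhaberSeries

section FaulhaberFormula

variable {a : ℝ}

lemma faulhaberCoeff_zero (a : ℝ) : faulhaberCoeff a 0 = 1 / 2 := by
  simp [faulhaberCoeff, bernoulli'_one]

lemma neg_one_pow_mul_S1 (k l : ℕ) : (-1) ^ k * S1 k l = (-1) ^ l * k.stirlingFirst l := by
  rw [S1, stirling1Unsigned_eq_stirlingFirst, pow_add, ← mul_assoc, ← mul_assoc, ← mul_pow]
  simp

lemma neg_one_pow_mul_bernoulli_succ {l : ℕ} (hl : l ≠ 0) :
    (-1) ^ l * bernoulli (l + 1) = -bernoulli' (l + 1) := by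
  rw [bernoulli_eq_bernoulli'_of_ne_one (by lia)]
  rcases Nat.even_or_odd l with heven | hodd
  · rw [bernoulli'_eq_zero_of_odd heven.add_one (by lia)]
    simp
  · rw [hodd.neg_one_pow, neg_one_mul]

lemma neg_one_pow_mul_sum_S1_eq_neg_faulhaberCoeff (a : ℝ) (k : ℕ) :
    (-1) ^ (k + 1) * ∑ l ∈ Finset.Icc 1 (k + 1), (ascPochhammer ℝ l).eval a / (l + 1).factorial *
      (bernoulli (l + 1) : ℝ) * (S1 (k + 1) l : ℝ) = -faulhaberCoeff a (k + 1) := by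
  have hterm : ∀ l ∈ Finset.Icc 1 (k + 1), (-1) ^ (k + 1) * ((ascPochhammer ℝ l).eval a /
      (l + 1).factorial * (bernoulli (l + 1) : ℝ) * (S1 (k + 1) l : ℝ)) =
      -((ascPochhammer ℝ l).eval a / (l + 1).factorial * (bernoulli' (l + 1) : ℝ) *
        (k + 1).stirlingFirst l) := by
    intro l hl
    have hS1 : ((-1) ^ (k + 1) * S1 (k + 1) l : ℝ) = (-1) ^ l * (k + 1).stirlingFirst l := by
      exact_mod_cast neg_one_pow_mul_S1 (k + 1) l
    have hbernoulli : ((-1) ^ l * bernoulli (l + 1) : ℝ) = -bernoulli' (l + 1) := by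
      have hl0 : l ≠ 0 := Nat.one_le_iff_ne_zero.1 (Finset.mem_Icc.1 hl).1
      exact_mod_cast neg_one_pow_mul_bernoulli_succ hl0
    linear_combination ((ascPochhammer ℝ l).eval a / (l + 1).factorial) *
      (bernoulli (l + 1) * hS1 + (k + 1).stirlingFirst l * hbernoulli)
  rw [Finset.mul_sum, Finset.sum_congr rfl hterm, Finset.sum_neg_distrib, faulhaberCoeff,
    Finset.range_eq_Ico, Finset.sum_eq_sum_Ico_succ_bot (by lia)]
  simp [← Finset.Ico_succ_right_eq_Icc]

lemma ofReal_risingProdR (x : ℝ) (k : ℕ) : (risingProdR x k : ℂ) = risingProd x k := by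
  simp [risingProdR, risingProd]

lemma sum_Icc_rpow_neg_eq (ha0 : 0 < a) (ha1 : a < 1) {n : ℕ} (hn : 1 ≤ n) :
    ((∑ k ∈ Finset.Icc 1 n, (k : ℝ) ^ (-a) : ℝ) : ℂ) = ((n : ℝ) ^ (1 - a) / (1 - a) : ℝ) +
      riemannZeta a + ((n : ℝ) ^ (-a) / 2 : ℝ) -
        ((n : ℝ) ^ (-a) * ∑' k, faulhaberCoeff a (k + 1) / risingProdR n (k + 1) : ℝ) := by
  obtain ⟨m, rfl⟩ := Nat.exists_eq_add_of_le' hn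
  have hv : (0 : ℝ) < (m + 1 : ℕ) := by positivity
  have hseries := hasSum_faulhaberCoeff_div_risingProdR ha0 ha1 hv
  have htail : ∑' k, faulhaberCoeff a (k + 1) / risingProdR (m + 1 : ℕ) (k + 1) =
      ((m + 1 : ℕ) : ℝ) ^ a * binetLaplace a (m + 1 : ℕ) / Real.Gamma a - 1 / 2 := by
    rw [← hseries.tsum_eq, hseries.summable.tsum_eq_zero_add, faulhaberCoeff_zero]
    simp [risingProdR]
  have hpow : ((m + 1 : ℕ) : ℝ) ^ (-a) * ((m + 1 : ℕ) : ℝ) ^ a = 1 := by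
    rw [← Real.rpow_add hv, neg_add_cancel, Real.rpow_zero]
  rw [riemannZeta_eq_sum_sub_add_binetLaplace ha0 ha1.ne m, htail]
  norm_cast
  rw [Finset.sum_Icc_succ_top (by lia), Finset.range_eq_Ico, Finset.sum_Ico_add' (fun k : ℕ ↦
    (k : ℝ) ^ (-a)), zero_add, ← Order.succ_eq_add_one m, Finset.Ico_succ_right_eq_Icc,
    Order.succ_eq_add_one]
  linear_combination (binetLaplace a (m + 1 : ℕ) / Real.Gamma a) * hpow

lemma ascPochhammer_eval_half (l : ℕ) :
    (ascPochhammer ℝ l).eval (1 / 2) = (2 * l - 1).doubleFactorial / 2 ^ l := by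
  induction l with
  | zero => simp
  | succ l ih =>
    rw [ascPochhammer_succ_eval, ih, show 2 * (l + 1) - 1 = 2 * l + 1 by lia,
      Nat.doubleFactorial_add_one]
    push_cast
    field_simp
    ring

end FaulhaberFormula

theorem faulhaber_inverse_sqrt_general {a : ℝ} (ha0 : 0 < a) (ha1 : a < 1) {n : ℕ} (hn : 1 ≤ n) :
    Summable (fun k : ℕ ↦ ‖(-1 : ℂ) ^ (k + 1) * (∑ l ∈ Finset.Icc 1 (k + 1),
      (((ascPochhammer ℝ l).eval a / (l + 1).factorial : ℝ) : ℂ) * (bernoulli (l + 1) : ℂ) *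
        (S1 (k + 1) l : ℂ)) / risingProd n (k + 1)‖) ∧
    ((∑ k ∈ Finset.Icc 1 n, (k : ℝ) ^ (-a) : ℝ) : ℂ) =
      ((n : ℝ) ^ (1 - a) / (1 - a) : ℝ) + riemannZeta a + ((n : ℝ) ^ (-a) / 2 : ℝ) +
        ((n : ℝ) ^ (-a) : ℝ) * ∑' k : ℕ, (-1 : ℂ) ^ (k + 1) * (∑ l ∈ Finset.Icc 1 (k + 1),
          (((ascPochhammer ℝ l).eval a / (l + 1).factorial : ℝ) : ℂ) * (bernoulli (l + 1) : ℂ) *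
            (S1 (k + 1) l : ℂ)) / risingProd n (k + 1) := by
  have hterm : ∀ k : ℕ, (-1 : ℂ) ^ (k + 1) * (∑ l ∈ Finset.Icc 1 (k + 1),
      (((ascPochhammer ℝ l).eval a / (l + 1).factorial : ℝ) : ℂ) * (bernoulli (l + 1) : ℂ) *
        (S1 (k + 1) l : ℂ)) / risingProd n (k + 1) =
      ((-(faulhaberCoeff a (k + 1) / risingProdR n (k + 1)) : ℝ) : ℂ) := fun k ↦ by
    rw [← neg_div, ← neg_one_pow_mul_sum_S1_eq_neg_faulhaberCoeff]
    push_cast [ofReal_risingProdR]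
    rfl
  have hsummable := ((summable_nat_add_iff 1).2
    (hasSum_faulhaberCoeff_div_risingProdR ha0 ha1 (Nat.cast_pos.2 hn)).summable).neg
  simp_rw [hterm]
  refine ⟨by simpa only [Complex.norm_real] using hsummable.norm, ?_⟩
  rw [sum_Icc_rpow_neg_eq ha0 ha1 hn, ← Complex.ofReal_tsum, tsum_neg]
  push_cast
  ring

open Finset in
/-- Generalized Faulhaber summation formula for the sum of inverse square roots
(summation formula 6, formula (52) of the paper). -/
theorem faulhaber_inverse_sqrt (n : ℕ) (hn : 1 ≤ n) :
    Summable (fun k : ℕ =>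
      ‖(-1 : ℂ) ^ (k + 1) *
          (∑ l ∈ Icc 1 (k + 1),
            ((Nat.doubleFactorial (2 * l - 1) : ℂ) /
                (2 ^ l * ((l + 1).factorial : ℂ))) *
              (bernoulli (l + 1) : ℂ) * (S1 (k + 1) l : ℂ)) /
        risingProd (n : ℂ) (k + 1)‖) ∧
    ((∑ k ∈ Icc 1 n, 1 / Real.sqrt k : ℝ) : ℂ) =
      2 * (Real.sqrt n : ℂ) + riemannZeta (1 / 2) + 1 / (2 * (Real.sqrt n : ℂ)) +
        1 / (Real.sqrt n : ℂ) *
          ∑' k : ℕ,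
            (-1 : ℂ) ^ (k + 1) *
                (∑ l ∈ Icc 1 (k + 1),
                  ((Nat.doubleFactorial (2 * l - 1) : ℂ) /
                      (2 ^ l * ((l + 1).factorial : ℂ))) *
                    (bernoulli (l + 1) : ℂ) * (S1 (k + 1) l : ℂ)) /
              risingProd (n : ℂ) (k + 1) := by
  have hrpow : ∀ k : ℕ, (k : ℝ) ^ (-(1 / 2) : ℝ) = 1 / √k := fun k ↦ by
    rw [Real.rpow_neg k.cast_nonneg, ← Real.sqrt_eq_rpow, one_div]
  have hgen := faulhaber_inverse_sqrt_general (a := 1 / 2) (by norm_num) (by norm_num) hn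
  simp only [ascPochhammer_eval_half, div_div, hrpow, sub_half, ← Real.sqrt_eq_rpow] at hgen
  push_cast at hgen ⊢
  convert hgen using 3
  ring
end
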